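/- arXiv:2511.13267 — 2 statements merged into one kernel-verified Lean document; each statement's English description precedes it below -/
import Mathlib

section
/- Let G be a finite simple connected bipartite graph with n vertices. Then the function s ↦ pd(I_c(G)^s) is strictly increasing until it attains its maximum value n−2; that is, for every s ≥ 1, if pd(I_c(G)^s) ≤ n−3 then pd(I_c(G)^{s+1}) ≥ pd(I_c(G)^s) + 1, and pd(I_c(G)^s) = n−2 for all s sufficiently large. -/
/-!
The multidegree `a` strand of the Koszul complex with coefficients in a monomial ideal `I` is the
chain complex of the upper Koszul complex `{F | x^(a - F) ∈ I}` (`nontrivial_Hmod_iff`), so `pdim`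
is a question about reduced simplicial homology. If the monomial generators of `I`, all of one
degree, have linear quotients, they can be added one at a time: in each multidegree, adding `m`
either does not change the homology (the new faces are matched by toggling a vertex, so a cone
construction applies) or attaches a single face `T`, a subset of the colon set of `m`, in
multidegree `a = m + T`, which creates a class because the homology of the earlier stage lies on the
linear strand (`hom_of_linQuot`). Hence `pd I` is the maximal size of a colon set.

The generators of `I_c(G)^s` are the monomials `x^(s·(1,…,1) - d)` where `d` runs through the degree
sequences of multisets of `s` edges of `G` (`compIdeal_pow`). Choose a search order of the connected
graph `G`: a root, and then every further vertex has an earlier neighbour. The generators have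
linear quotients for the lexicographic order along it (`SearchOrder.linQuot`). Indeed, let `w` be
the first vertex where the degree sequences `d`, `d'` of two generators differ, with `d w < d' w`.
Alternating trails in the bipartite graph `G` (`DegSeq.exchange`, `DegSeq.exists_surplus`) give
either a vertex `v` with `d' v < d v` such that `d - v + w` is a degree sequence, or two such
vertices `v`, `z` such that `d - v - z` is the degree sequence of `s - 1` edges; in the second case
an edge joining `v` or `z` to an earlier neighbour is put back, which moves weight to an earlier
vertex for one of the two choices.

Therefore `pd (I_c(G)^s)` is the maximal size of the colon sets (`SearchOrder.pdim_eq`). A vertex `v`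
lies in the colon set of the generator of `d` iff `d - v + u` is a degree sequence for some `u`
earlier than `v`. The root never qualifies, nor does the second vertex, because the only candidate
for `u` would be the root, which lies on the other side of the bipartition; so the size is at most
`n - 2`. If another vertex `v` is missing, let `p` be an earlier neighbour of `v`: some vertex `u`
adjacent to `p` precedes `v`, and after multiplication by the generator of the edge `{v, p}` the
colon set contains all its former elements and also `v`, since `{v, p}` may be replaced by `{u, p}`
(`SearchOrder.exists_card_lt`). So the maximum grows strictly with `s` until it equals `n - 2`.
-/

open MvPolynomial

namespace Paper

noncomputable section

variable (K : Type) [Field K] (n : ℕ)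

/-- The polynomial ring `S = K[x_1, …, x_n]`. -/
abbrev S := MvPolynomial (Fin n) K

variable {n}

/-- The squarefree exponent vector of a subset `F ⊆ [n]`. -/
def expF (F : Finset (Fin n)) : Fin n →₀ ℕ := ∑ j ∈ F, Finsupp.single j 1

variable {K}

/-- Basis of the multidegree-`a` component of the `i`-th term of the Koszul
complex of `x_1, …, x_n` tensored with the ideal `I`:  subsets `F` of
cardinality `i` such that `x^(a - ε_F) ∈ I`. -/
abbrev KB (I : Ideal (S K n)) (a : Fin n →₀ ℕ) (i : ℕ) : Type :=
  {F : Finset (Fin n) // F.card = i ∧ expF F ≤ a ∧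
    (monomial (a - expF F) (1 : K) : S K n) ∈ I}

/-- The Koszul differential (in multidegree `a`) from homological degree
`i+1` to `i`. -/
def kd (I : Ideal (S K n)) (a : Fin n →₀ ℕ) (i : ℕ) :
    (KB I a (i + 1) →₀ K) →ₗ[K] (KB I a i →₀ K) :=
  Finsupp.lsum K fun F =>
    LinearMap.toSpanSingleton K _
      (∑ j ∈ F.1.attach,
        ((-1 : K) ^ ((F.1.filter (fun x => x < j.1)).card)) •
          Finsupp.single
            (⟨F.1.erase j.1, by
              obtain ⟨hcard, hle, hmem⟩ := F.2
              have hj : j.1 ∈ F.1 := j.2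
              have herase : expF (F.1.erase j.1) + Finsupp.single j.1 1 = expF F.1 := by
                simpa [expF] using Finset.sum_erase_add F.1 (fun k => Finsupp.single k (1:ℕ)) hj
              refine ⟨by simp [Finset.card_erase_of_mem hj, hcard], ?_, ?_⟩
              · refine le_trans ?_ hle
                rw [← herase]; exact le_add_of_nonneg_right bot_le
              · have h1 : Finsupp.single j.1 1 ≤ expF F.1 := by
                  rw [← herase]; exact le_add_of_nonneg_left bot_le
                have key : a - expF (F.1.erase j.1) =
                    (a - expF F.1) + Finsupp.single j.1 1 := by
                  have : expF (F.1.erase j.1) = expF F.1 - Finsupp.single j.1 1 := by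
                    rw [← herase]; simp
                  rw [this, tsub_tsub_assoc hle h1]
                rw [key]
                have : (monomial ((a - expF F.1) + Finsupp.single j.1 1) (1:K) : S K n)
                    = (monomial (a - expF F.1) (1:K)) * (monomial (Finsupp.single j.1 1) (1:K)) := by
                  rw [monomial_mul, mul_one]
                rw [this]
                exact Ideal.mul_mem_right _ _ hmem⟩ : KB I a i) (1 : K))

/-- The outgoing Koszul differential from homological degree `i`
(the zero map when `i = 0`). -/
def kdOut (I : Ideal (S K n)) (a : Fin n →₀ ℕ) :
    (i : ℕ) → (KB I a i →₀ K) →ₗ[K] (KB I a (i - 1) →₀ K)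
  | 0 => 0
  | (i + 1) => kd I a i

/-- The multidegree-`a` component of `Tor_i^S(K, I)`, computed as the `i`-th
homology of the multidegree-`a` strand of the Koszul complex tensored
with `I`. -/
abbrev Hmod (I : Ideal (S K n)) (a : Fin n →₀ ℕ) (i : ℕ) :=
  ↥(Submodule.map (Submodule.mkQ (LinearMap.range (kd I a i)))
      (LinearMap.ker (kdOut I a i)))

/-- The `i`-th homological shift ideal `HS_i(I)`, generated by the monomials
`x^a` with `Tor_i^S(K, I)_a ≠ 0`. -/
def HSIdeal (i : ℕ) (I : Ideal (S K n)) : Ideal (S K n) :=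
  Ideal.span {p | ∃ a : Fin n →₀ ℕ, Nontrivial (Hmod I a i) ∧ p = monomial a 1}

/-- `I` is a monomial ideal. -/
def IsMonomialIdeal (I : Ideal (S K n)) : Prop :=
  ∃ A : Set (Fin n →₀ ℕ), I = Ideal.span ((fun a => (monomial a 1 : S K n)) '' A)

/-- `I` has a `d`-linear resolution: `Tor_i^S(K,I)_j = 0` whenever `j ≠ i + d`. -/
def LinearRes (d : ℕ) (I : Ideal (S K n)) : Prop :=
  ∀ (i : ℕ) (a : Fin n →₀ ℕ), (a.sum fun _ e => e) ≠ i + d → Subsingleton (Hmod I a i)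

/-- The projective dimension of (a finitely generated multigraded module such
as) `I` over `S`: the largest `i` with `Tor_i^S(K, I) ≠ 0`. -/
def pdim (I : Ideal (S K n)) : ℕ :=
  sSup {i | ∃ a, Nontrivial (Hmod I a i)}

variable (K n)

/-- The graded maximal ideal `𝔪 = (x_1, …, x_n)`. -/
def maxIdl : Ideal (S K n) := Ideal.span (Set.range X)

/-- The `i`-th squarefree power `𝔪^{[i]} = (x_F : F ⊆ [n], |F| = i)`. -/
def sqPow (i : ℕ) : Ideal (S K n) :=
  Ideal.span {p | ∃ F : Finset (Fin n), F.card = i ∧ p = monomial (expF F) 1}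

/-- The exponent vector of `α = x_1⋯x_n`. -/
def aexp : Fin n →₀ ℕ := expF (Finset.univ : Finset (Fin n))

/-- The edge ideal `I(G)` of a graph `G` on `[n]`. -/
def edgeIdeal (G : SimpleGraph (Fin n)) : Ideal (S K n) :=
  Ideal.span {p | ∃ i j, G.Adj i j ∧ p = X i * X j}

/-- The complementary edge ideal `I_c(G)` of a graph `G` on `[n]`. -/
def compIdeal (G : SimpleGraph (Fin n)) : Ideal (S K n) :=
  Ideal.span {p | ∃ i j, G.Adj i j ∧
    p = monomial (aexp n - Finsupp.single i 1 - Finsupp.single j 1) 1}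


variable {K} {n}

end

/-! ### Simplicial chains on subsets of `[n]` -/

section Chains

variable {K : Type} [Field K] {n : ℕ}

/-- The sign of `v` relative to `F` in the Koszul differential. -/
def sgn (K : Type) [Field K] {n : ℕ} (v : Fin n) (F : Finset (Fin n)) : K :=
  (-1) ^ ((F.filter (fun x => x < v)).card)

/-- The simplicial boundary on chains of the full simplex on `[n]`, a chain being encoded as its
coefficient function; the value at `F` collects the contributions of the sets `F ∪ {v}`. -/
def bd (c : Finset (Fin n) → K) (F : Finset (Fin n)) : K :=
  ∑ v ∈ Fᶜ, sgn K v F * c (insert v F)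

/-- The cone operator with apex `w`, a contracting homotopy of the full simplex. -/
def cone (w : Fin n) (c : Finset (Fin n) → K) (F : Finset (Fin n)) : K :=
  if w ∈ F then sgn K w F * c (F.erase w) else 0

theorem sgn_mul_self (v : Fin n) (F : Finset (Fin n)) : sgn K v F * sgn K v F = 1 := by
  unfold sgn
  rw [← mul_pow]; simp

theorem sgn_insert_of_lt {u v : Fin n} {F : Finset (Fin n)} (h : u < v) (hu : u ∉ F) :
    sgn K v (insert u F) = - sgn K v F := by
  unfold sgn
  rw [Finset.filter_insert, if_pos h, Finset.card_insert_of_notMem (by simp [hu]), pow_succ]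
  ring

theorem sgn_insert_of_not_lt {u v : Fin n} {F : Finset (Fin n)} (h : ¬ u < v) :
    sgn K v (insert u F) = sgn K v F := by
  unfold sgn
  rw [Finset.filter_insert, if_neg h]

theorem sgn_erase_of_lt {u v : Fin n} {F : Finset (Fin n)} (h : u < v) (hu : u ∈ F) :
    sgn K v (F.erase u) = - sgn K v F := by
  conv_rhs => rw [← Finset.insert_erase hu]
  rw [sgn_insert_of_lt h (by simp), neg_neg]

theorem sgn_erase_of_not_lt {u v : Fin n} {F : Finset (Fin n)} (h : ¬ u < v) (hu : u ∈ F) :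
    sgn K v (F.erase u) = sgn K v F := by
  conv_rhs => rw [← Finset.insert_erase hu]
  rw [sgn_insert_of_not_lt h]

theorem sgn_swap {u v : Fin n} {F : Finset (Fin n)} (huv : u ≠ v) (hu : u ∉ F) (hv : v ∉ F) :
    sgn K v F * sgn K u (insert v F) = - (sgn K u F * sgn K v (insert u F)) := by
  rcases lt_or_gt_of_ne huv with h | h
  · rw [sgn_insert_of_lt h hu, sgn_insert_of_not_lt (not_lt.2 h.le)]; ring
  · rw [sgn_insert_of_lt h hv, sgn_insert_of_not_lt (not_lt.2 h.le)]; ring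

theorem bd_add (c c' : Finset (Fin n) → K) : bd (c + c') = bd c + bd c' := by
  funext F
  simp [bd, mul_add, Finset.sum_add_distrib]

theorem bd_sub (c c' : Finset (Fin n) → K) : bd (c - c') = bd c - bd c' := by
  funext F
  simp [bd, mul_sub, Finset.sum_sub_distrib]

theorem bd_zero : bd (0 : Finset (Fin n) → K) = 0 := by
  funext F
  simp [bd]

theorem bd_bd (c : Finset (Fin n) → K) : bd (bd c) = 0 := by
  funext F
  simp only [bd, Finset.mul_sum, Pi.zero_apply]
  rw [Finset.sum_sigma']
  refine Finset.sum_involution (fun p _ => ⟨p.2, p.1⟩) ?_ ?_ ?_ ?_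
  · rintro ⟨v, u⟩ h
    simp only [Finset.mem_sigma, Finset.mem_compl, Finset.mem_insert, not_or] at h
    obtain ⟨hv, huv, hu⟩ := h
    simp only
    rw [← mul_assoc, ← mul_assoc, sgn_swap huv hu hv, Finset.insert_comm v u]
    ring
  · rintro ⟨v, u⟩ h _ heq
    simp only [Finset.mem_sigma, Finset.mem_compl, Finset.mem_insert, not_or] at h
    simp only [Sigma.mk.injEq] at heq
    exact h.2.1 heq.1
  · rintro ⟨v, u⟩ h
    simp only [Finset.mem_sigma, Finset.mem_compl, Finset.mem_insert, not_or] at h ⊢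
    exact ⟨h.2.2, Ne.symm h.2.1, h.1⟩
  · rintro ⟨v, u⟩ h
    rfl

theorem bd_cone (w : Fin n) (c : Finset (Fin n) → K) :
    bd (cone w c) + cone w (bd c) = c := by
  funext F
  simp only [Pi.add_apply]
  by_cases hw : w ∈ F
  · have h1 : cone w (bd c) F =
        c F + ∑ v ∈ Fᶜ, sgn K w F * (sgn K v (F.erase w) * c (insert v (F.erase w))) := by
      have hc : (F.erase w)ᶜ = insert w Fᶜ := by
        ext x; simp only [Finset.mem_compl, Finset.mem_erase, Finset.mem_insert]; tauto
      simp only [cone, if_pos hw, bd, hc]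
      rw [Finset.sum_insert (by simp [hw]), Finset.insert_erase hw, mul_add, ← mul_assoc,
        sgn_erase_of_not_lt (lt_irrefl w) hw, sgn_mul_self, one_mul, Finset.mul_sum]
    rw [h1]
    simp only [bd]
    rw [add_left_comm, ← Finset.sum_add_distrib, Finset.sum_eq_zero, add_zero]
    intro v hv
    have hvF : v ∉ F := by simpa using hv
    have hne : w ≠ v := fun h => hvF (h ▸ hw)
    have h2 : (insert v F).erase w = insert v (F.erase w) :=
      Finset.erase_insert_of_ne hne.symm
    rw [cone, if_pos (Finset.mem_insert_of_mem hw), h2]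
    rcases lt_or_gt_of_ne hne with h | h
    · rw [sgn_erase_of_lt h hw, sgn_insert_of_not_lt (not_lt.2 h.le)]; ring
    · rw [sgn_erase_of_not_lt (not_lt.2 h.le) hw, sgn_insert_of_lt h hvF]; ring
  · have h1 : cone w (bd c) F = 0 := by simp [cone, hw]
    rw [h1, add_zero]
    simp only [bd]
    rw [Finset.sum_eq_single w]
    · rw [cone, if_pos (Finset.mem_insert_self w F), Finset.erase_insert hw,
        sgn_insert_of_not_lt (lt_irrefl w), ← mul_assoc, sgn_mul_self, one_mul]
    · intro v _ hne
      rw [cone, if_neg (by simp [hw, hne.symm]), mul_zero]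
    · intro h
      exact absurd (Finset.mem_compl.2 hw) h

/-- `c` is a chain on faces of `Δ` with exactly `i` elements. -/
def ChainOn (Δ : Set (Finset (Fin n))) (i : ℕ) (c : Finset (Fin n) → K) : Prop :=
  ∀ F, c F ≠ 0 → F ∈ Δ ∧ F.card = i

variable (K) in
/-- Non-vanishing of the reduced homology of `Δ` over `K` on faces with `i` elements, that is,
in dimension `i - 1`. -/
def HasHom (Δ : Set (Finset (Fin n))) (i : ℕ) : Prop :=
  ∃ c : Finset (Fin n) → K, ChainOn Δ i c ∧ bd c = 0 ∧ ∀ e, ChainOn Δ (i + 1) e → bd e ≠ c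

theorem ChainOn.mono {Δ Δ' : Set (Finset (Fin n))} (h : Δ' ⊆ Δ) {i : ℕ}
    {c : Finset (Fin n) → K} (hc : ChainOn Δ' i c) : ChainOn Δ i c :=
  fun F hF => ⟨h (hc F hF).1, (hc F hF).2⟩

theorem ChainOn.add {Δ : Set (Finset (Fin n))} {i : ℕ} {c c' : Finset (Fin n) → K}
    (hc : ChainOn Δ i c) (hc' : ChainOn Δ i c') : ChainOn Δ i (c + c') := by
  intro F hF
  by_cases h : c F = 0
  · exact hc' F (by intro h'; exact hF (by simp [h, h']))
  · exact hc F h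

theorem ChainOn.sub {Δ : Set (Finset (Fin n))} {i : ℕ} {c c' : Finset (Fin n) → K}
    (hc : ChainOn Δ i c) (hc' : ChainOn Δ i c') : ChainOn Δ i (c - c') := by
  intro F hF
  by_cases h : c F = 0
  · exact hc' F (by intro h'; exact hF (by simp [h, h']))
  · exact hc F h

theorem exists_of_bd_ne_zero {c : Finset (Fin n) → K} {F : Finset (Fin n)} (h : bd c F ≠ 0) :
    ∃ v, v ∉ F ∧ c (insert v F) ≠ 0 := by
  obtain ⟨v, hv, hne⟩ := Finset.exists_ne_zero_of_sum_ne_zero h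
  exact ⟨v, by simpa using hv, right_ne_zero_of_mul hne⟩

theorem ChainOn.bd {Δ : Set (Finset (Fin n))} (hΔ : IsLowerSet Δ) {i : ℕ}
    {c : Finset (Fin n) → K} (hc : ChainOn Δ (i + 1) c) : ChainOn Δ i (bd c) := by
  intro F hF
  obtain ⟨v, hv, hne⟩ := exists_of_bd_ne_zero hF
  obtain ⟨h1, h2⟩ := hc _ hne
  rw [Finset.card_insert_of_notMem hv] at h2
  exact ⟨hΔ (Finset.subset_insert v F) h1, by omega⟩

open Classical in
/-- The part of a chain supported outside of `Δ'`. -/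
noncomputable def outside (Δ' : Set (Finset (Fin n))) (c : Finset (Fin n) → K) (F : Finset (Fin n)) : K :=
  if F ∈ Δ' then 0 else c F

/-- If `Δ \ Δ'` is closed under toggling the vertex `w`, then every chain of `Δ` whose boundary
lies in `Δ'` is homologous in `Δ` to a chain of `Δ'`. -/
theorem exists_push {Δ Δ' : Set (Finset (Fin n))} (hΔ' : IsLowerSet Δ')
    (hΔ : IsLowerSet Δ) (w : Fin n) (hins : ∀ F ∈ Δ \ Δ', insert w F ∈ Δ \ Δ')
    (hera : ∀ F ∈ Δ \ Δ', F.erase w ∈ Δ \ Δ') {i : ℕ} {c : Finset (Fin n) → K}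
    (hc : ChainOn Δ i c) (hbd : ∀ F, bd c F ≠ 0 → F ∈ Δ') :
    ∃ e, ChainOn Δ (i + 1) e ∧ ChainOn Δ' i (c - bd e) := by
  have hq : ∀ F, outside Δ' c F ≠ 0 → F ∈ Δ \ Δ' ∧ F.card = i := by
    intro F hF
    unfold outside at hF
    split_ifs at hF with h
    · exact absurd rfl hF
    · exact ⟨⟨(hc F hF).1, h⟩, (hc F hF).2⟩
  have he : ChainOn Δ (i + 1) (cone w (outside Δ' c)) := by
    intro F hF
    unfold cone at hF
    split_ifs at hF with h
    · obtain ⟨h1, h2⟩ := hq _ (right_ne_zero_of_mul hF)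
      have := hins _ h1
      rw [Finset.insert_erase h] at this
      rw [Finset.card_erase_of_mem h] at h2
      have := Finset.card_pos.2 ⟨w, h⟩
      exact ⟨‹F ∈ Δ \ Δ'›.1, by omega⟩
    · exact absurd rfl hF
  refine ⟨cone w (outside Δ' c), he, ?_⟩
  have hcard : ChainOn Δ i (c - bd (cone w (outside Δ' c))) := hc.sub (he.bd hΔ)
  intro F hF
  refine ⟨?_, (hcard F hF).2⟩
  by_contra hFn
  apply hF
  have hcF : outside Δ' c F = c F := by simp [outside, hFn]
  have hhom := congrFun (bd_cone w (outside Δ' c)) F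
  simp only [Pi.add_apply, hcF] at hhom
  rw [Pi.sub_apply, ← hhom, add_sub_cancel_left]
  -- it remains to see that `F` is not in the support of the cone over `∂ (outside Δ' c)`
  by_cases hw : w ∈ F
  · by_contra hne
    rw [cone, if_pos hw] at hne
    have hbo : bd (outside Δ' c) (F.erase w) ≠ 0 := right_ne_zero_of_mul hne
    have hera' : F.erase w ∈ Δ' := by
      by_contra hG
      -- outside of `Δ'` the boundaries of `c` and of its outer part agree
      have heq : bd (outside Δ' c) (F.erase w) = bd c (F.erase w) := by
        unfold bd
        refine Finset.sum_congr rfl fun v _ => ?_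
        rw [outside, if_neg]
        exact fun h => hG (hΔ' (Finset.subset_insert _ _) h)
      exact hG (hbd _ (heq ▸ hbo))
    have hFΔ : F ∈ Δ := (hcard F hF).1
    exact (hera F ⟨hFΔ, hFn⟩).2 hera'
  · simp [cone, hw]

theorem hasHom_of_toggle {Δ Δ' : Set (Finset (Fin n))} (hΔ' : IsLowerSet Δ')
    (hΔ : IsLowerSet Δ) (hsub : Δ' ⊆ Δ)
    (w : Fin n) (hins : ∀ F ∈ Δ \ Δ', insert w F ∈ Δ \ Δ')
    (hera : ∀ F ∈ Δ \ Δ', F.erase w ∈ Δ \ Δ') (i : ℕ) :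
    HasHom K Δ i ↔ HasHom K Δ' i := by
  constructor
  · rintro ⟨c, hc, hz, hb⟩
    obtain ⟨e, he, hce⟩ := exists_push hΔ' hΔ w hins hera hc
      (fun F hF => absurd (congrFun hz F) hF)
    refine ⟨c - bd e, hce, by rw [bd_sub, hz, bd_bd, sub_zero], fun f hf hfe => ?_⟩
    exact hb (f + e) ((hf.mono hsub).add he) (by rw [bd_add, hfe, sub_add_cancel])
  · rintro ⟨c, hc, hz, hb⟩
    refine ⟨c, hc.mono hsub, hz, fun e he hec => ?_⟩
    obtain ⟨f, hf, hef⟩ := exists_push hΔ' hΔ w hins hera he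
      (fun F hF => (hc F (by rwa [← hec])).1)
    exact hb _ hef (by rw [bd_sub, bd_bd, sub_zero, hec])

theorem HasHom.of_single {Δ Δ' : Set (Finset (Fin n))} {F₀ : Finset (Fin n)}
    (hsub : Δ' ⊆ Δ) (hQ : ∀ F ∈ Δ \ Δ', F = F₀) {i : ℕ}
    (h : HasHom K Δ i) (hi : F₀.card ≠ i) : HasHom K Δ' i := by
  obtain ⟨c, hc, hz, hb⟩ := h
  refine ⟨c, fun F hF => ⟨?_, (hc F hF).2⟩, hz, fun e he => hb e (he.mono hsub)⟩
  by_contra hn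
  exact hi (hQ F ⟨(hc F hF).1, hn⟩ ▸ (hc F hF).2)

theorem HasHom.to_single {Δ Δ' : Set (Finset (Fin n))} {F₀ : Finset (Fin n)}
    (hsub : Δ' ⊆ Δ) (hQ : ∀ F ∈ Δ \ Δ', F = F₀) {i : ℕ}
    (h : HasHom K Δ' i) (hi : F₀.card ≠ i + 1) : HasHom K Δ i := by
  obtain ⟨c, hc, hz, hb⟩ := h
  refine ⟨c, hc.mono hsub, hz, fun e he => hb e fun F hF => ⟨?_, (he F hF).2⟩⟩
  by_contra hn
  exact hi (hQ F ⟨(he F hF).1, hn⟩ ▸ (he F hF).2)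

/-- Attaching a single facet `F₀` along a complex without homology one dimension below
creates a class in the dimension of `F₀`. -/
theorem hasHom_single {Δ Δ' : Set (Finset (Fin n))} {F₀ : Finset (Fin n)}
    (hΔ' : IsLowerSet Δ') (hΔ : IsLowerSet Δ)
    (hsub : Δ' ⊆ Δ) (hQ : ∀ F ∈ Δ \ Δ', F = F₀) (hF : F₀ ∈ Δ \ Δ')
    (hvan : ∀ j, j + 1 = F₀.card → ¬ HasHom K Δ' j) : HasHom K Δ F₀.card := by
  classical
  set δ : Finset (Fin n) → K := fun F => if F = F₀ then 1 else 0 with hδ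
  have hδc : ChainOn Δ F₀.card δ := by
    intro F hne
    simp only [hδ] at hne
    split_ifs at hne with h
    · exact ⟨h ▸ hF.1, by rw [h]⟩
    · exact absurd rfl hne
  have key : ∃ e, ChainOn Δ' F₀.card e ∧ bd e = bd δ := by
    rcases Nat.eq_zero_or_pos F₀.card with h0 | hpos
    · refine ⟨0, fun F hne => absurd rfl hne, ?_⟩
      rw [bd_zero]
      funext F
      by_contra hne
      obtain ⟨v, hv, hne⟩ := exists_of_bd_ne_zero (Ne.symm hne)
      have := (hδc _ hne).2
      rw [Finset.card_insert_of_notMem hv] at this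
      omega
    · obtain ⟨j, hj⟩ : ∃ j, j + 1 = F₀.card := ⟨F₀.card - 1, by omega⟩
      have hb := hvan j hj
      rw [← hj] at hδc ⊢
      have hch : ChainOn Δ' j (bd δ) := by
        intro F hne
        obtain ⟨h1, h2⟩ := hδc.bd hΔ F hne
        refine ⟨?_, h2⟩
        by_contra hn
        have := hQ F ⟨h1, hn⟩
        rw [this] at h2
        omega
      unfold HasHom at hb
      push Not at hb
      exact hb _ hch (bd_bd δ)
  obtain ⟨e, he, hbe⟩ := key
  refine ⟨δ - e, hδc.sub (he.mono hsub), by rw [bd_sub, hbe, sub_self], fun f hf hfe => ?_⟩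
  have h1 : (δ - e) F₀ = 1 := by
    have : e F₀ = 0 := by
      by_contra hne
      exact hF.2 (he _ hne).1
    simp [hδ, this]
  obtain ⟨v, hv, hne⟩ := exists_of_bd_ne_zero (c := f) (F := F₀) (by rw [hfe, h1]; exact one_ne_zero)
  -- `F₀` is a facet: a larger face would lie in `Δ'`, and with it `F₀`
  have h3 : insert v F₀ ∉ Δ' := fun h => hF.2 (hΔ' (Finset.subset_insert v F₀) h)
  exact hv (hQ _ ⟨(hf _ hne).1, h3⟩ ▸ Finset.mem_insert_self v F₀)

end Chains
/-! ### Koszul strands as simplicial chain complexes -/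

section Bridge

variable {K : Type} [Field K] {n : ℕ}

/-- The upper Koszul complex of `I` in multidegree `a`. -/
def upKoszul (I : Ideal (S K n)) (a : Fin n →₀ ℕ) : Set (Finset (Fin n)) :=
  {F | expF F ≤ a ∧ (monomial (a - expF F) (1 : K) : S K n) ∈ I}

/-- The chain on `[n]` given by an element of the Koszul strand. -/
noncomputable def toChain {I : Ideal (S K n)} {a : Fin n →₀ ℕ} {i : ℕ} (x : KB I a i →₀ K) :
    Finset (Fin n) → K :=
  ⇑(Finsupp.mapDomain Subtype.val x)

theorem toChain_apply {I : Ideal (S K n)} {a : Fin n →₀ ℕ} {i : ℕ} (x : KB I a i →₀ K)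
    (F : KB I a i) : toChain x F.1 = x F :=
  Finsupp.mapDomain_apply Subtype.val_injective x F

theorem toChain_injective {I : Ideal (S K n)} {a : Fin n →₀ ℕ} {i : ℕ} :
    Function.Injective (toChain : (KB I a i →₀ K) → _) := by
  intro x y h
  ext F
  rw [← toChain_apply, ← toChain_apply, h]

theorem chainOn_toChain {I : Ideal (S K n)} {a : Fin n →₀ ℕ} {i : ℕ} (x : KB I a i →₀ K) :
    ChainOn (upKoszul I a) i (toChain x) := by
  intro F hF
  by_cases h : F ∈ Set.range (Subtype.val : KB I a i → Finset (Fin n))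
  · obtain ⟨⟨F, h1, h2⟩, rfl⟩ := h
    exact ⟨h2, h1⟩
  · exact absurd (Finsupp.mapDomain_of_notMem_range x F h) hF

theorem exists_toChain {I : Ideal (S K n)} {a : Fin n →₀ ℕ} {i : ℕ} {c : Finset (Fin n) → K}
    (hc : ChainOn (upKoszul I a) i c) : ∃ x : KB I a i →₀ K, toChain x = c := by
  refine ⟨Finsupp.equivFunOnFinite.symm fun F => c F.1, ?_⟩
  funext F
  by_cases h : F.card = i ∧ F ∈ upKoszul I a
  · exact toChain_apply _ (⟨F, h⟩ : KB I a i)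
  · have h1 : c F = 0 := by
      by_contra hne
      exact h ⟨(hc F hne).2, (hc F hne).1⟩
    rw [h1]
    by_contra hne
    obtain ⟨h2, h3⟩ := chainOn_toChain _ F hne
    exact h ⟨h3, h2⟩

theorem toChain_kd {I : Ideal (S K n)} {a : Fin n →₀ ℕ} {i : ℕ} (x : KB I a (i + 1) →₀ K) :
    toChain (kd I a i x) = bd (toChain x) := by
  induction x using Finsupp.induction_linear with
  | zero => simp [toChain, bd_zero]
  | add x y hx hy =>
    have h1 : ∀ {j : ℕ} (u v : KB I a j →₀ K), toChain (u + v) = toChain u + toChain v := by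
      intro j u v; simp [toChain, Finsupp.mapDomain_add]
    rw [map_add, h1, h1, hx, hy, bd_add]
  | single F t =>
    funext H
    simp only [kd, Finsupp.lsum_apply, LinearMap.toSpanSingleton_apply, map_zero,
      Finsupp.sum_single_index, toChain, bd, Finsupp.mapDomain_single, Finsupp.mapDomain_smul,
      Finsupp.mapDomain_finsetSum, Finsupp.coe_smul, Finsupp.coe_finsetSum, Pi.smul_apply,
      Finset.sum_apply, Finsupp.single_apply, smul_eq_mul]
    rw [Finset.sum_attach F.1 (fun j => (-1 : K) ^ ((F.1.filter (fun x => x < j)).card) *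
      (if F.1.erase j = H then 1 else 0)), Finset.mul_sum]
    by_cases hH : ∃ v, v ∉ H ∧ F.1 = insert v H
    · obtain ⟨v, hv, hF⟩ := hH
      rw [hF, Finset.sum_eq_single v, Finset.sum_eq_single v]
      · rw [if_pos (Finset.erase_insert hv), if_pos rfl, Finset.filter_insert,
          if_neg (lt_irrefl v), sgn]
        ring
      · intro u hu hne
        rw [if_neg, mul_zero]
        intro h
        have : u ∈ insert v H := h ▸ Finset.mem_insert_self u H
        simp only [Finset.mem_insert, hne, false_or] at this
        exact (Finset.mem_compl.1 hu) this
      · intro h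
        exact absurd (Finset.mem_compl.2 hv) h
      · intro u hu hne
        rw [if_neg, mul_zero, mul_zero]
        intro h
        have : v ∈ (insert v H).erase u := by simp [hne.symm]
        exact hv (h ▸ this)
      · intro h
        exact absurd (Finset.mem_insert_self v H) h
    · rw [Finset.sum_eq_zero, Finset.sum_eq_zero]
      · intro v hv
        rw [if_neg, mul_zero]
        exact fun h => hH ⟨v, Finset.mem_compl.1 hv, h⟩
      · intro v hv
        rw [if_neg, mul_zero, mul_zero]
        exact fun h => hH ⟨v, h ▸ Finset.notMem_erase v _, by rw [← h, Finset.insert_erase hv]⟩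

theorem nontrivial_Hmod_iff (I : Ideal (S K n)) (a : Fin n →₀ ℕ) (i : ℕ) :
    Nontrivial (Hmod I a i) ↔ HasHom K (upKoszul I a) i := by
  have hker : ∀ x : KB I a i →₀ K, kdOut I a i x = 0 ↔ bd (toChain x) = 0 := by
    intro x
    cases i with
    | zero =>
      refine ⟨fun _ => ?_, fun _ => rfl⟩
      funext F
      by_contra hne
      obtain ⟨v, hv, hne⟩ := exists_of_bd_ne_zero hne
      have := (chainOn_toChain x _ hne).2
      rw [Finset.card_insert_of_notMem hv] at this
      omega
    | succ i =>
      have h0 : toChain (0 : KB I a i →₀ K) = 0 := by simp [toChain]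
      rw [← toChain_kd, ← h0]
      exact (toChain_injective.eq_iff).symm
  have h1 : Nontrivial (Hmod I a i) ↔
      ∃ x : KB I a i →₀ K, kdOut I a i x = 0 ∧ x ∉ LinearMap.range (kd I a i) := by
    rw [Submodule.nontrivial_iff_ne_bot, Submodule.ne_bot_iff]
    constructor
    · rintro ⟨y, ⟨x, hx, rfl⟩, hne⟩
      refine ⟨x, hx, fun h => hne ?_⟩
      exact (Submodule.Quotient.mk_eq_zero _).2 h
    · rintro ⟨x, hx, hne⟩
      exact ⟨_, ⟨x, hx, rfl⟩, fun h => hne ((Submodule.Quotient.mk_eq_zero _).1 h)⟩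
  rw [h1]
  constructor
  · rintro ⟨x, hx, hne⟩
    refine ⟨toChain x, chainOn_toChain x, (hker x).1 hx, fun e he hee => hne ?_⟩
    obtain ⟨y, rfl⟩ := exists_toChain he
    exact ⟨y, toChain_injective (by rw [toChain_kd, hee])⟩
  · rintro ⟨c, hc, hz, hb⟩
    obtain ⟨x, rfl⟩ := exists_toChain hc
    refine ⟨x, (hker x).2 hz, ?_⟩
    rintro ⟨y, hy⟩
    exact hb (toChain y) (chainOn_toChain y) (by rw [← toChain_kd, hy])

end Bridge
/-! ### Linear quotients -/

section LinearQuotients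

variable {K : Type} [Field K] {n : ℕ}

theorem expF_apply (F : Finset (Fin n)) (v : Fin n) : expF F v = if v ∈ F then 1 else 0 := by
  classical
  simp [expF, Finsupp.finsetSum_apply, Finsupp.single_apply]

theorem degree_expF (F : Finset (Fin n)) : (expF F).degree = F.card := by
  simp [expF]

/-- The upper Koszul complex, in multidegree `a`, of the monomial ideal generated by the
exponents in `Γ`. -/
def upSet (Γ : Finset (Fin n →₀ ℕ)) (a : Fin n →₀ ℕ) : Set (Finset (Fin n)) :=
  {F | ∃ m ∈ Γ, m + expF F ≤ a}

theorem isLowerSet_upSet (Γ : Finset (Fin n →₀ ℕ)) (a : Fin n →₀ ℕ) :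
    IsLowerSet (upSet Γ a) := by
  rintro F H hHF ⟨m, hm, hle⟩
  refine ⟨m, hm, le_trans ?_ hle⟩
  intro v
  have : H ⊆ F := hHF
  simp only [Finsupp.add_apply, expF_apply]
  have := @this v
  split_ifs <;> simp_all

variable {α : Type*} [LinearOrder α]

open Classical in
/-- The variables `x_v` contained in the colon ideal `(m' : m' precedes m) : m`, where the order is
given by the key `κ`. With linear quotients they generate this ideal. -/
noncomputable def colonSet (κ : (Fin n →₀ ℕ) → α) (Γ : Finset (Fin n →₀ ℕ)) (m : Fin n →₀ ℕ) :
    Finset (Fin n) :=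
  Finset.univ.filter fun v => ∃ m' ∈ Γ, κ m' < κ m ∧ m' ≤ m + Finsupp.single v 1

theorem mem_colonSet {κ : (Fin n →₀ ℕ) → α} {Γ : Finset (Fin n →₀ ℕ)} {m : Fin n →₀ ℕ}
    {v : Fin n} : v ∈ colonSet κ Γ m ↔ ∃ m' ∈ Γ, κ m' < κ m ∧ m' ≤ m + Finsupp.single v 1 := by
  simp [colonSet]

/-- `Γ` has linear quotients with respect to the order given by `κ`. -/
def LinQuot (κ : (Fin n →₀ ℕ) → α) (Γ : Finset (Fin n →₀ ℕ)) : Prop :=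
  ∀ m ∈ Γ, ∀ m' ∈ Γ, κ m' < κ m → ∃ v ∈ colonSet κ Γ m, m v < m' v

/-- The faces of the upper Koszul complex which are new when the last generator `m` is added. -/
theorem mem_new_iff {κ : (Fin n →₀ ℕ) → α} {Γ : Finset (Fin n →₀ ℕ)} {m : Fin n →₀ ℕ}
    (hmax : ∀ m' ∈ Γ, κ m' < κ m) (hlq : LinQuot κ (insert m Γ)) (a : Fin n →₀ ℕ)
    (F : Finset (Fin n)) :
    F ∈ upSet (insert m Γ) a \ upSet Γ a ↔
      m + expF F ≤ a ∧ ∀ v ∈ colonSet κ (insert m Γ) m, m v + expF F v = a v := by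
  constructor
  · rintro ⟨⟨m₁, hm₁, hle⟩, hnot⟩
    have hm : m₁ = m := by
      rcases Finset.mem_insert.1 hm₁ with h | h
      · exact h
      · exact absurd ⟨m₁, h, hle⟩ hnot
    subst hm
    refine ⟨hle, fun v hv => le_antisymm (hle v) ?_⟩
    by_contra hlt
    obtain ⟨m', hm', hlt', hle'⟩ := mem_colonSet.1 hv
    have hm'Γ : m' ∈ Γ := by
      rcases Finset.mem_insert.1 hm' with h | h
      · exact absurd hlt' (h ▸ lt_irrefl _)
      · exact h
    refine hnot ⟨m', hm'Γ, fun u => ?_⟩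
    have h1 := hle' u
    have h2 := hle u
    simp only [Finsupp.add_apply, Finsupp.single_apply] at h1 h2 ⊢
    split_ifs at h1 with huv
    · subst huv; omega
    · omega
  · rintro ⟨hle, heq⟩
    refine ⟨⟨m, Finset.mem_insert_self _ _, hle⟩, ?_⟩
    rintro ⟨m', hm', hle'⟩
    obtain ⟨v, hv, hlt⟩ := hlq m (Finset.mem_insert_self _ _) m' (Finset.mem_insert_of_mem hm')
      (hmax m' hm')
    have h1 := heq v hv
    have h2 := hle' v
    simp only [Finsupp.add_apply] at h2
    omega

theorem colonSet_insert {κ : (Fin n →₀ ℕ) → α} {Γ : Finset (Fin n →₀ ℕ)} {m m₁ : Fin n →₀ ℕ}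
    (hmax : ∀ m' ∈ Γ, κ m' < κ m) (hm₁ : m₁ ∈ Γ) :
    colonSet κ (insert m Γ) m₁ = colonSet κ Γ m₁ := by
  ext v
  simp only [mem_colonSet]
  constructor
  · rintro ⟨m', hm', hlt, hle⟩
    rcases Finset.mem_insert.1 hm' with h | h
    · exact absurd (h ▸ hlt) (not_lt.2 (hmax m₁ hm₁).le)
    · exact ⟨m', h, hlt, hle⟩
  · rintro ⟨m', hm', hlt, hle⟩
    exact ⟨m', Finset.mem_insert_of_mem hm', hlt, hle⟩

theorem LinQuot.of_insert {κ : (Fin n →₀ ℕ) → α} {Γ : Finset (Fin n →₀ ℕ)} {m : Fin n →₀ ℕ}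
    (hmax : ∀ m' ∈ Γ, κ m' < κ m) (hlq : LinQuot κ (insert m Γ)) : LinQuot κ Γ := by
  intro m₁ hm₁ m' hm' hlt
  obtain ⟨v, hv, h⟩ := hlq m₁ (Finset.mem_insert_of_mem hm₁) m' (Finset.mem_insert_of_mem hm') hlt
  exact ⟨v, colonSet_insert hmax hm₁ ▸ hv, h⟩

/-- Either the new faces can be toggled at some vertex, or they reduce to at most one face `F`,
which is a subset of the colon set with `a = m + F`. -/
theorem new_cases {κ : (Fin n →₀ ℕ) → α} {Γ : Finset (Fin n →₀ ℕ)} {m : Fin n →₀ ℕ}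
    (hmax : ∀ m' ∈ Γ, κ m' < κ m) (hlq : LinQuot κ (insert m Γ)) (a : Fin n →₀ ℕ) :
    (∃ w, (∀ F ∈ upSet (insert m Γ) a \ upSet Γ a, insert w F ∈ upSet (insert m Γ) a \ upSet Γ a) ∧
      ∀ F ∈ upSet (insert m Γ) a \ upSet Γ a, F.erase w ∈ upSet (insert m Γ) a \ upSet Γ a) ∨
    (∀ F ∈ upSet (insert m Γ) a \ upSet Γ a, a = m + expF F ∧ F ⊆ colonSet κ (insert m Γ) m) := by
  by_cases h : ∃ w, w ∉ colonSet κ (insert m Γ) m ∧ m w < a w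
  · obtain ⟨w, hw, hlt⟩ := h
    left
    simp only [mem_new_iff hmax hlq]
    refine ⟨w, fun F hF => ⟨fun u => ?_, fun v hv => ?_⟩, fun F hF => ⟨fun u => ?_, fun v hv => ?_⟩⟩
    · have := hF.1 u
      simp only [Finsupp.add_apply, expF_apply, Finset.mem_insert] at this ⊢
      by_cases huw : u = w
      · subst huw; simp; omega
      · simpa [huw] using this
    · have hne : v ≠ w := fun h => hw (h ▸ hv)
      have := hF.2 v hv
      simpa [expF_apply, hne] using this
    · have := hF.1 u
      simp only [Finsupp.add_apply, expF_apply, Finset.mem_erase] at this ⊢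
      by_cases huw : u = w
      · subst huw; simp; omega
      · simpa [huw] using this
    · have hne : v ≠ w := fun h => hw (h ▸ hv)
      have := hF.2 v hv
      simpa [expF_apply, hne] using this
  · right
    push Not at h
    intro F hF
    rw [mem_new_iff hmax hlq] at hF
    constructor
    · ext v
      by_cases hv : v ∈ colonSet κ (insert m Γ) m
      · exact (hF.2 v hv).symm
      · have h1 := h v hv
        have h2 := hF.1 v
        simp only [Finsupp.add_apply] at h2 ⊢
        omega
    · intro v hvF
      by_contra hv
      have h1 := h v hv
      have h2 := hF.1 v
      simp only [Finsupp.add_apply, expF_apply, if_pos hvF] at h2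
      omega

theorem upSet_insert_mono (Γ : Finset (Fin n →₀ ℕ)) (m a : Fin n →₀ ℕ) :
    upSet Γ a ⊆ upSet (insert m Γ) a :=
  fun _ ⟨m', hm', h⟩ => ⟨m', Finset.mem_insert_of_mem hm', h⟩

theorem expF_injective : Function.Injective (expF : Finset (Fin n) → (Fin n →₀ ℕ)) := by
  intro F H h
  ext v
  have := DFunLike.congr_fun h v
  simp only [expF_apply] at this
  split_ifs at this <;> simp_all

/-- The homology of the upper Koszul complexes of equigenerated monomials with linear quotients:
it is concentrated on the linear strand, and every subset `T` of a colon set of a generator `m`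
contributes a class in multidegree `m + T`. -/
theorem hom_of_linQuot (κ : (Fin n →₀ ℕ) → α) (hκ : Function.Injective κ) (δ : ℕ)
    (Γ : Finset (Fin n →₀ ℕ)) (hdeg : ∀ m ∈ Γ, m.degree = δ) (hlq : LinQuot κ Γ) :
    (∀ i a, HasHom K (upSet Γ a) i → a.degree = δ + i ∧ ∃ m ∈ Γ, i ≤ (colonSet κ Γ m).card) ∧
    (∀ m ∈ Γ, ∀ T ⊆ colonSet κ Γ m, HasHom K (upSet Γ (m + expF T)) T.card) := by
  induction Γ using Finset.induction_on_max_value κ with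
  | empty =>
    refine ⟨?_, by simp⟩
    rintro i a ⟨c, hc, hz, hb⟩
    exfalso
    refine hb 0 (fun F hF => absurd rfl hF) ?_
    rw [bd_zero]
    funext F
    by_contra hne
    obtain ⟨m, hm, _⟩ := (hc F (Ne.symm hne)).1
    simp at hm
  | insert m Γ hm hle ih =>
    have hmax : ∀ m' ∈ Γ, κ m' < κ m := fun m' hm' =>
      lt_of_le_of_ne (hle m' hm') fun h => hm (hκ h ▸ hm')
    obtain ⟨ih1, ih2⟩ := ih (fun m' hm' => hdeg m' (Finset.mem_insert_of_mem hm'))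
      (hlq.of_insert hmax)
    have hδ : m.degree = δ := hdeg m (Finset.mem_insert_self _ _)
    have huniq : ∀ {a F H}, a = m + expF F → a = m + expF H → F = H := by
      intro a F H h1 h2
      exact expF_injective (add_left_cancel (h1.symm.trans h2))
    have hadeg : ∀ {a F}, a = m + expF F → a.degree = δ + F.card := by
      rintro a F rfl
      rw [map_add, hδ, degree_expF]
    refine ⟨fun i a h => ?_, fun m₁ hm₁ T hT => ?_⟩
    · have hlift : HasHom K (upSet Γ a) i → a.degree = δ + i ∧
          ∃ m' ∈ insert m Γ, i ≤ (colonSet κ (insert m Γ) m').card := by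
        intro h
        obtain ⟨h1, m', hm', h2⟩ := ih1 i a h
        exact ⟨h1, m', Finset.mem_insert_of_mem hm', by rwa [colonSet_insert hmax hm']⟩
      rcases new_cases hmax hlq a with ⟨w, hins, hera⟩ | hQ
      · exact hlift ((hasHom_of_toggle (isLowerSet_upSet _ _) (isLowerSet_upSet _ _)
          (upSet_insert_mono Γ m a) w hins hera i).1 h)
      · by_cases hF : ∃ F ∈ upSet (insert m Γ) a \ upSet Γ a, F.card = i
        · obtain ⟨F, hF, rfl⟩ := hF
          obtain ⟨h1, h2⟩ := hQ F hF
          exact ⟨hadeg h1, m, Finset.mem_insert_self _ _, Finset.card_le_card h2⟩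
        · push Not at hF
          apply hlift
          by_cases hne : ∃ F, F ∈ upSet (insert m Γ) a \ upSet Γ a
          · obtain ⟨F, hF'⟩ := hne
            exact h.of_single (upSet_insert_mono Γ m a)
              (fun H hH => huniq (hQ H hH).1 (hQ F hF').1) (hF F hF')
          · have : upSet (insert m Γ) a = upSet Γ a := by
              refine Set.Subset.antisymm (fun F hF => ?_) (upSet_insert_mono Γ m a)
              by_contra hn
              exact hne ⟨F, hF, hn⟩
            rwa [this] at h
    · rcases Finset.mem_insert.1 hm₁ with rfl | hm₁Γ
      · have hTnew : T ∈ upSet (insert m₁ Γ) (m₁ + expF T) \ upSet Γ (m₁ + expF T) :=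
          (mem_new_iff hmax hlq _ _).2 ⟨le_rfl, fun v _ => rfl⟩
        have hQ : ∀ F ∈ upSet (insert m₁ Γ) (m₁ + expF T) \ upSet Γ (m₁ + expF T), F = T := by
          intro F hF
          rw [mem_new_iff hmax hlq] at hF
          ext v
          by_cases hv : v ∈ colonSet κ (insert m₁ Γ) m₁
          · have := hF.2 v hv
            simp only [Finsupp.add_apply, expF_apply] at this
            split_ifs at this <;> first | omega | tauto
          · have h1 : v ∉ T := fun h => hv (hT h)
            have := hF.1 v
            simp only [Finsupp.add_apply, expF_apply, if_neg h1] at this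
            split_ifs at this <;> first | omega | tauto
        refine hasHom_single (isLowerSet_upSet _ _) (isLowerSet_upSet _ _)
          (upSet_insert_mono _ _ _) hQ hTnew fun j hj h => ?_
        have h1 := (ih1 j _ h).1
        have h2 := hadeg (rfl : m₁ + expF T = m₁ + expF T)
        omega
      · rw [colonSet_insert hmax hm₁Γ] at hT
        have h := ih2 m₁ hm₁Γ T hT
        have hd := (ih1 _ _ h).1
        rcases new_cases hmax hlq (m₁ + expF T) with ⟨w, hins, hera⟩ | hQ
        · exact (hasHom_of_toggle (isLowerSet_upSet _ _) (isLowerSet_upSet _ _)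
            (upSet_insert_mono _ _ _) w hins hera _).2 h
        · by_cases hne : ∃ F, F ∈ upSet (insert m Γ) (m₁ + expF T) \ upSet Γ (m₁ + expF T)
          · obtain ⟨F, hF⟩ := hne
            refine h.to_single (upSet_insert_mono _ _ _)
              (fun H hH => huniq (hQ H hH).1 (hQ F hF).1) ?_
            have := hadeg (hQ F hF).1
            omega
          · have : upSet (insert m Γ) (m₁ + expF T) = upSet Γ (m₁ + expF T) := by
              refine Set.Subset.antisymm (fun F hF => ?_) (upSet_insert_mono _ _ _)
              by_contra hn
              exact hne ⟨F, hF, hn⟩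
            rwa [this]

end LinearQuotients
/-! ### Degree sequences of bipartite multigraphs -/

section DegreeSequences

variable {n : ℕ} {G : SimpleGraph (Fin n)}

/-- The exponent vector of the variable `x_v`. -/
noncomputable abbrev vtx (v : Fin n) : Fin n →₀ ℕ := Finsupp.single v 1

/-- `DegSeq G s d`: the vector `d` is the degree sequence of a multiset of `s` edges of `G`. -/
inductive DegSeq (G : SimpleGraph (Fin n)) : ℕ → (Fin n →₀ ℕ) → Prop
  | zero : DegSeq G 0 0
  | succ {s : ℕ} {d : Fin n →₀ ℕ} {i j : Fin n} :
      DegSeq G s d → G.Adj i j → DegSeq G (s + 1) (d + vtx i + vtx j)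

theorem DegSeq.exists_remove {s : ℕ} {d : Fin n →₀ ℕ} (h : DegSeq G s d) {w : Fin n}
    (hw : d w ≠ 0) :
    ∃ t x b, s = t + 1 ∧ G.Adj w b ∧ DegSeq G t x ∧ d = x + vtx w + vtx b := by
  induction h with
  | zero => simp at hw
  | @succ s d i j h hij ih =>
    by_cases hi : i = w
    · subst hi; exact ⟨s, d, j, rfl, hij, h, rfl⟩
    by_cases hj : j = w
    · subst hj; exact ⟨s, d, i, rfl, hij.symm, h, by abel⟩
    obtain ⟨t, x, b, rfl, hb, hx, rfl⟩ := ih (by simpa [hi, hj] using hw)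
    exact ⟨t + 1, x + vtx i + vtx j, b, rfl, hb, hx.succ hij, by abel⟩

theorem DegSeq.apply_le {s : ℕ} {d : Fin n →₀ ℕ} (h : DegSeq G s d) (v : Fin n) : d v ≤ s := by
  induction h with
  | zero => simp
  | @succ s d i j h hij ih =>
    have := hij.ne
    simp only [Finsupp.add_apply, Finsupp.single_apply]
    split_ifs with h1 h2
    · exact absurd (h1.trans h2.symm) this
    all_goals omega

open Classical in
/-- Every edge has exactly one end on the side `A`. -/
theorem DegSeq.sum_side {A : Set (Fin n)} (hA : ∀ i j, G.Adj i j → (i ∈ A ↔ j ∉ A)) {s : ℕ}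
    {d : Fin n →₀ ℕ} (h : DegSeq G s d) : ∑ v with v ∈ A, d v = s := by
  induction h with
  | zero => simp
  | @succ s d i j h hij ih =>
    have := hA i j hij
    simp only [Finsupp.add_apply, Finset.sum_add_distrib, ih, Finsupp.single_apply,
      Finset.sum_ite_eq, Finset.mem_filter, Finset.mem_univ, true_and]
    by_cases hj : j ∈ A <;> simp_all

/-- Following an alternating trail from a vertex `w` at which `d` is smaller than `d'`: the trail
ends either at a vertex `v` where `d` exceeds `d'`, and then `d - v + w` is a degree sequence, or
at a vertex `b` on the other side where `d` is smaller than `d'`, and then the trail can be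
removed from `d'`. -/
theorem DegSeq.exchange {A : Set (Fin n)} (hA : ∀ i j, G.Adj i j → (i ∈ A ↔ j ∉ A)) (s' : ℕ) :
    ∀ {s : ℕ} {d d' : Fin n →₀ ℕ} {w : Fin n}, DegSeq G s d → DegSeq G s' d' → d w < d' w →
    (∃ v x, d' v < d v ∧ DegSeq G s x ∧ x + vtx v = d + vtx w) ∨
    (∃ b x t, (b ∈ A ↔ w ∉ A) ∧ d b < d' b ∧ s' = t + 1 ∧ DegSeq G t x ∧
      d' = x + vtx w + vtx b) := by
  induction s' with
  | zero =>
    intro s d d' w _ hd' hw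
    cases hd'
    simp at hw
  | succ s' ih =>
    intro s d d' w hd hd' hw
    obtain ⟨t, y, b, ht, hwb, hy, hd'y⟩ := hd'.exists_remove (w := w) (by omega)
    obtain rfl : s' = t := by omega
    by_cases hb : d b < d' b
    · exact Or.inr ⟨b, y, s', by have := hA w b hwb; tauto, hb, rfl, hy, hd'y⟩
    have hyu : ∀ u, d' u = y u + (if w = u then 1 else 0) + (if b = u then 1 else 0) := by
      intro u; rw [hd'y]; simp [Finsupp.single_apply]
    obtain ⟨r, z, a, rfl, hba, hz, hdz⟩ := hd.exists_remove (w := b) (by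
      have := hyu b
      rw [if_pos rfl] at this
      omega)
    have hzu : ∀ u, d u = z u + (if b = u then 1 else 0) + (if a = u then 1 else 0) := by
      intro u; rw [hdz]; simp [Finsupp.single_apply]
    by_cases ha : d' a < d a
    · exact Or.inl ⟨a, z + vtx w + vtx b, ha, hz.succ hwb, by rw [hdz]; abel⟩
    have hab : b ≠ a := hba.ne
    have hwb' : w ≠ b := hwb.ne
    have hza : z a < y a := by
      have h1 := hyu a
      have h2 := hzu a
      simp only [if_neg hab, if_true] at h1 h2
      split_ifs at h1 with hwa
      · subst hwa; omega
      · omega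
    rcases ih hz hy hza with ⟨v, x, hv, hx, hxv⟩ | ⟨b', x, t, hb'A, hb', rfl, hx, hyx⟩
    · refine Or.inl ⟨v, x + vtx b + vtx w, ?_, hx.succ hwb.symm, ?_⟩
      · have h1 := hyu v
        have h2 := hzu v
        have hva : a ≠ v := by rintro rfl; omega
        have hvw : w ≠ v := by
          rintro rfl
          simp only [if_neg hva, if_true] at h1 h2
          split_ifs at h1 h2 <;> omega
        rw [if_neg hvw] at h1
        rw [if_neg hva] at h2
        omega
      · rw [hdz, add_right_comm, add_right_comm x, hxv]; abel
    · refine Or.inr ⟨b', x + vtx b + vtx a, t + 1, ?_, ?_, rfl, hx.succ hba, ?_⟩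
      · have h1 := hA w b hwb
        have h2 := hA b a hba
        tauto
      · have h1 := hyu b'
        have h2 := hzu b'
        have hba' : a ≠ b' := by rintro rfl; tauto
        rw [if_neg hba'] at h2
        omega
      · rw [hd'y, hyx]; abel

/-- If `d` uses more edges than `d'`, there is an alternating trail which starts and ends with
edges of `d`, at vertices where `d` exceeds `d'`; it can be removed from `d`. -/
theorem DegSeq.exists_surplus {A : Set (Fin n)} (hA : ∀ i j, G.Adj i j → (i ∈ A ↔ j ∉ A))
    (N : ℕ) : ∀ {s s' : ℕ} {d d' : Fin n →₀ ℕ}, DegSeq G s d → DegSeq G s' d' → s' < s →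
    ∑ u, (d u - d' u) ≤ N →
    ∃ v z x t, d' v < d v ∧ d' z < d z ∧ s = t + 1 ∧ DegSeq G t x ∧ d = x + vtx v + vtx z := by
  classical
  induction N with
  | zero =>
    intro s s' d d' hd hd' hs hN
    exfalso
    have h1 := hd.sum_side hA
    have h2 := hd'.sum_side hA
    have h3 : ∑ v with v ∈ A, d v ≤ ∑ v with v ∈ A, d' v := by
      refine Finset.sum_le_sum fun u _ => ?_
      have := Finset.sum_eq_zero_iff.1 (Nat.le_zero.1 hN) u (Finset.mem_univ u)
      omega
    omega
  | succ N ih =>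
    intro s s' d d' hd hd' hs hN
    obtain ⟨v, hv⟩ : ∃ v, d' v < d v := by
      by_contra hcon
      push Not at hcon
      have h1 := hd.sum_side hA
      have h2 := hd'.sum_side hA
      have h3 : ∑ v with v ∈ A, d v ≤ ∑ v with v ∈ A, d' v :=
        Finset.sum_le_sum fun u _ => hcon u
      omega
    rcases DegSeq.exchange hA s hd' hd hv with ⟨u, x, hu, hx, hxu⟩ | ⟨z, x, t, _, hz, ht, hx, hdx⟩
    · have hxp : ∀ y, x y + (if u = y then 1 else 0) = d' y + (if v = y then 1 else 0) := by
        intro y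
        have := DFunLike.congr_fun hxu y
        simpa [Finsupp.single_apply] using this
      have huv : u ≠ v := by rintro rfl; omega
      -- replacing `d'` by `x = d' - u + v` brings it closer to `d`
      have hlt : ∑ y, (d y - x y) < ∑ y, (d y - d' y) := by
        refine Finset.sum_lt_sum (fun y _ => ?_) ⟨v, Finset.mem_univ v, ?_⟩
        · have := hxp y
          split_ifs at this with h1 h2 <;> subst_vars <;> omega
        · have := hxp v
          rw [if_neg huv, if_pos rfl] at this
          omega
      obtain ⟨v', z', x', t', h1, h2, h3⟩ := ih hd hx hs (by omega)
      have hup : ∀ y, x y < d y → d' y < d y := by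
        intro y hy
        have := hxp y
        split_ifs at this with h1 h2 <;> subst_vars <;> omega
      exact ⟨v', z', x', t', hup _ h1, hup _ h2, h3⟩
    · exact ⟨v, z, x, t, hv, hz, ht, hx, hdx⟩

/-- For equal numbers of edges, the second alternative of `DegSeq.exchange` leaves `d` with more
edges than the rest of `d'`, so that `DegSeq.exists_surplus` applies. -/
theorem DegSeq.exchange_or_surplus {A : Set (Fin n)}
    (hA : ∀ i j, G.Adj i j → (i ∈ A ↔ j ∉ A)) {s : ℕ} {d d' : Fin n →₀ ℕ} {w : Fin n}
    (hd : DegSeq G s d) (hd' : DegSeq G s d') (hw : d w < d' w) :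
    (∃ v x, d' v < d v ∧ DegSeq G s x ∧ x + vtx v = d + vtx w) ∨
    (∃ v z x t, d' v < d v ∧ d' z < d z ∧ s = t + 1 ∧ DegSeq G t x ∧ d = x + vtx v + vtx z) := by
  rcases DegSeq.exchange hA s hd hd' hw with h | ⟨b, x, t, _, hb, ht, hx, hd'x⟩
  · exact Or.inl h
  · right
    obtain ⟨v, z, y, r, h1, h2, h3⟩ := DegSeq.exists_surplus hA _ hd hx (by omega) le_rfl
    have hxu : ∀ u, d' u = x u + (if w = u then 1 else 0) + (if b = u then 1 else 0) := by
      intro u; rw [hd'x]; simp [Finsupp.single_apply]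
    have hwb : w ≠ b := by rintro rfl; tauto
    have hup : ∀ u, x u < d u → d' u < d u := by
      intro u hu
      have := hxu u
      split_ifs at this with h1 h2 <;> subst_vars <;> omega
    exact ⟨v, z, y, r, hup _ h1, hup _ h2, h3⟩

end DegreeSequences

/-! ### Generators of the powers and their order -/

section Generators

variable {n : ℕ} {G : SimpleGraph (Fin n)}

theorem aexp_apply (v : Fin n) : aexp n v = 1 := by
  simp [aexp, expF_apply]

/-- The exponents of the generators of `I_c(G)^s`. -/
def genSet (G : SimpleGraph (Fin n)) (s : ℕ) : Set (Fin n →₀ ℕ) :=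
  {m | ∃ d, DegSeq G s d ∧ m + d = s • aexp n}

theorem finite_genSet (G : SimpleGraph (Fin n)) (s : ℕ) : (genSet G s).Finite := by
  refine (Set.finite_Iic (s • aexp n)).subset ?_
  rintro m ⟨d, _, h⟩
  rw [Set.mem_Iic, ← h]
  exact le_self_add

/-- The generator exponents of `I_c(G)^s` as a finite set. -/
noncomputable def gens (G : SimpleGraph (Fin n)) (s : ℕ) : Finset (Fin n →₀ ℕ) :=
  (finite_genSet G s).toFinset

theorem mem_gens {s : ℕ} {m : Fin n →₀ ℕ} :
    m ∈ gens G s ↔ ∃ d, DegSeq G s d ∧ m + d = s • aexp n := by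
  simp [gens, genSet]

theorem DegSeq.exists_gen {s : ℕ} {d : Fin n →₀ ℕ} (h : DegSeq G s d) :
    ∃ m ∈ gens G s, m + d = s • aexp n := by
  have hle : d ≤ s • aexp n := fun v => by simpa [aexp_apply] using h.apply_le v
  exact ⟨s • aexp n - d, mem_gens.2 ⟨d, h, tsub_add_cancel_of_le hle⟩, tsub_add_cancel_of_le hle⟩

theorem edge_gen {i j : Fin n} (hij : i ≠ j) :
    (aexp n - Finsupp.single i 1 - Finsupp.single j 1) + (vtx i + vtx j) = aexp n := by
  ext v
  simp only [Finsupp.add_apply, Finsupp.tsub_apply, aexp_apply, Finsupp.single_apply]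
  split_ifs <;> subst_vars <;> simp_all

theorem compIdeal_pow (K : Type) [Field K] (s : ℕ) :
    compIdeal K n G ^ s =
      Ideal.span ((fun m => (monomial m (1 : K) : S K n)) '' (gens G s : Set (Fin n →₀ ℕ))) := by
  induction s with
  | zero =>
    have : (gens G 0 : Set (Fin n →₀ ℕ)) = {0} := by
      ext m
      simp only [Finset.mem_coe, mem_gens, zero_smul, Set.mem_singleton_iff]
      constructor
      · rintro ⟨d, h, h'⟩
        cases h
        simpa using h'
      · rintro rfl
        exact ⟨0, DegSeq.zero, by simp⟩
    rw [pow_zero, this, Set.image_singleton]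
    have h1 : (monomial (0 : Fin n →₀ ℕ) (1 : K) : S K n) = 1 := rfl
    rw [h1, Ideal.span_singleton_one, Ideal.one_eq_top]
  | succ s ih =>
    rw [pow_succ, ih, compIdeal, Ideal.span_mul_span']
    congr 1
    ext p
    simp only [Set.mem_mul, Set.mem_image, Finset.mem_coe, Set.mem_ofPred_eq]
    constructor
    · rintro ⟨_, ⟨m, hm, rfl⟩, _, ⟨i, j, hij, rfl⟩, rfl⟩
      obtain ⟨d, hd, hmd⟩ := mem_gens.1 hm
      refine ⟨m + (aexp n - Finsupp.single i 1 - Finsupp.single j 1),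
        mem_gens.2 ⟨_, hd.succ hij, ?_⟩, by rw [monomial_mul, mul_one]⟩
      rw [add_assoc d, add_add_add_comm, hmd, edge_gen hij.ne, succ_nsmul]
    · rintro ⟨m, hm, rfl⟩
      obtain ⟨d', hd', hmd⟩ := mem_gens.1 hm
      cases hd' with
      | @succ _ d i j hd hij =>
        obtain ⟨m', hm', hmd'⟩ := hd.exists_gen
        refine ⟨_, ⟨m', hm', rfl⟩, _, ⟨i, j, hij, rfl⟩, ?_⟩
        rw [monomial_mul, mul_one]
        congr 2
        apply add_right_cancel (b := d + vtx i + vtx j)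
        rw [hmd, add_assoc d, add_add_add_comm, hmd', edge_gen hij.ne, succ_nsmul]

theorem upKoszul_eq (K : Type) [Field K] (s : ℕ) (a : Fin n →₀ ℕ) :
    upKoszul (compIdeal K n G ^ s) a = upSet (gens G s) a := by
  classical
  ext F
  rw [upKoszul, compIdeal_pow]
  simp only [Set.mem_ofPred_eq, mem_ideal_span_monomial_image, upSet]
  rw [support_monomial, if_neg one_ne_zero]
  simp only [Finset.mem_singleton, forall_eq, Finset.mem_coe]
  constructor
  · rintro ⟨hF, m, hm, hle⟩
    exact ⟨m, hm, (le_tsub_iff_right hF).1 hle⟩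
  · rintro ⟨m, hm, hle⟩
    have hF : expF F ≤ a := le_trans le_add_self hle
    exact ⟨hF, m, hm, (le_tsub_iff_right hF).2 hle⟩

/-- A search order of `G`: an injective ranking of the vertices, starting with a root, in which
every other vertex has a neighbour of smaller rank. -/
structure SearchOrder (G : SimpleGraph (Fin n)) where
  /-- the first vertex -/
  root : Fin n
  /-- the rank of a vertex -/
  pos : Fin n → ℕ
  inj : Function.Injective pos
  root_le : ∀ v, pos root ≤ pos v
  parent : ∀ v, v ≠ root → ∃ p, G.Adj v p ∧ pos p < pos v

theorem exists_searchOrder (hconn : G.Connected) : Nonempty (SearchOrder G) := by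
  obtain ⟨r⟩ := hconn.nonempty
  have hn : 0 < n := Fin.pos r
  have hlt : ∀ {u v}, G.dist r u < G.dist r v → n * G.dist r u + u.val < n * G.dist r v + v.val := by
    intro u v h
    have h1 : n * (G.dist r u + 1) ≤ n * G.dist r v := Nat.mul_le_mul_left n h
    have := u.isLt
    rw [mul_add] at h1
    omega
  refine ⟨⟨r, fun v => n * G.dist r v + v.val, ?_, ?_, ?_⟩⟩
  · intro u v h
    have h' : n * G.dist r u + u.val = n * G.dist r v + v.val := h
    rcases lt_trichotomy (G.dist r u) (G.dist r v) with h1 | h1 | h1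
    · exact absurd h' (hlt h1).ne
    · rw [h1] at h'
      exact Fin.ext (by omega)
    · exact absurd h' (hlt h1).ne'
  · intro v
    by_cases hv : v = r
    · rw [hv]
    · refine (hlt ?_).le
      rw [SimpleGraph.dist_self]
      exact hconn.pos_dist_of_ne (Ne.symm hv)
  · intro v hv
    obtain ⟨p, hp⟩ := hconn.exists_walk_length_eq_dist v r
    cases p with
    | nil => exact absurd rfl hv
    | @cons _ u _ h q =>
      refine ⟨u, h, hlt ?_⟩
      have h1 := SimpleGraph.dist_le q
      rw [SimpleGraph.Walk.length_cons, SimpleGraph.dist_comm] at hp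
      rw [SimpleGraph.dist_comm] at h1
      omega

/-- Compares exponent vectors lexicographically along the search order. -/
noncomputable def SearchOrder.key (o : SearchOrder G) (m : Fin n →₀ ℕ) : Lex (ℕ → ℕ) :=
  toLex (Function.extend o.pos m 0)

theorem SearchOrder.key_injective (o : SearchOrder G) : Function.Injective o.key := by
  intro m m' h
  ext v
  have := congrFun (toLex.injective h) (o.pos v)
  rwa [o.inj.extend_apply, o.inj.extend_apply] at this

theorem SearchOrder.key_lt_iff (o : SearchOrder G) {m m' : Fin n →₀ ℕ} :
    o.key m' < o.key m ↔ ∃ w, m' w < m w ∧ ∀ v, o.pos v < o.pos w → m' v = m v := by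
  constructor
  · rintro ⟨i, hi, hlt⟩
    by_cases h : ∃ w, o.pos w = i
    · obtain ⟨w, rfl⟩ := h
      refine ⟨w, ?_, fun v hv => ?_⟩
      · simpa [SearchOrder.key, o.inj.extend_apply] using hlt
      · simpa [SearchOrder.key, o.inj.extend_apply] using hi (o.pos v) hv
    · simp [SearchOrder.key, Function.extend_apply' _ _ _ h] at hlt
  · rintro ⟨w, hlt, heq⟩
    refine ⟨o.pos w, fun j hj => ?_, ?_⟩
    · by_cases h : ∃ v, o.pos v = j
      · obtain ⟨v, rfl⟩ := h
        simpa [SearchOrder.key, o.inj.extend_apply] using heq v hj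
      · simp [SearchOrder.key, Function.extend_apply' _ _ _ h]
    · simpa [SearchOrder.key, o.inj.extend_apply] using hlt

theorem SearchOrder.key_lt_of_swap (o : SearchOrder G) {m m' : Fin n →₀ ℕ} {u v : Fin n}
    (h : m' + vtx u = m + vtx v) (huv : o.pos u < o.pos v) : o.key m' < o.key m := by
  have hp : ∀ y, m' y + (if u = y then 1 else 0) = m y + (if v = y then 1 else 0) := by
    intro y
    have := DFunLike.congr_fun h y
    simpa [Finsupp.single_apply] using this
  have hne : v ≠ u := by rintro rfl; omega
  rw [o.key_lt_iff]
  refine ⟨u, ?_, fun y hy => ?_⟩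
  · have := hp u
    rw [if_pos rfl, if_neg hne] at this
    omega
  · have := hp y
    have h1 : u ≠ y := by rintro rfl; omega
    have h2 : v ≠ y := by rintro rfl; omega
    rw [if_neg h1, if_neg h2] at this
    omega

end Generators
/-! ### Colon sets and projective dimension -/

section ColonSets

variable {n : ℕ} {G : SimpleGraph (Fin n)}

theorem degree_gens {s : ℕ} {m : Fin n →₀ ℕ} (hm : m ∈ gens G s) :
    m.degree = s * n - 2 * s := by
  obtain ⟨d, hd, hmd⟩ := mem_gens.1 hm
  have h1 : d.degree = 2 * s := by
    clear hmd hm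
    induction hd with
    | zero => simp
    | succ h hij ih => simp [ih]; ring
  have h2 := congrArg Finsupp.degree hmd
  rw [map_add, map_nsmul, aexp, degree_expF, Finset.card_univ, Fintype.card_fin, h1,
    smul_eq_mul] at h2
  omega

theorem SearchOrder.mem_colonSet_of_swap (o : SearchOrder G) {s : ℕ} {m d x : Fin n →₀ ℕ}
    {u v : Fin n} (hmd : m + d = s • aexp n) (hx : DegSeq G s x) (hswap : x + vtx v = d + vtx u)
    (huv : o.pos u < o.pos v) : v ∈ colonSet o.key (gens G s) m := by
  obtain ⟨m', hm', hmx⟩ := hx.exists_gen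
  have h : m' + vtx u = m + vtx v := by
    apply add_right_cancel (b := d + x)
    calc m' + vtx u + (d + x) = (m' + x) + (d + vtx u) := by abel
      _ = (m + d) + (x + vtx v) := by rw [hmx, hmd, hswap]
      _ = m + vtx v + (d + x) := by abel
  exact mem_colonSet.2 ⟨m', hm', o.key_lt_of_swap h huv, h ▸ le_self_add⟩

/-- The generators of `I_c(G)^s` have linear quotients with respect to the lexicographic order
along a search order. -/
theorem SearchOrder.linQuot (o : SearchOrder G) {A : Set (Fin n)}
    (hA : ∀ i j, G.Adj i j → (i ∈ A ↔ j ∉ A)) (s : ℕ) : LinQuot o.key (gens G s) := by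
  intro m hm m' hm' hlt
  obtain ⟨d, hd, hmd⟩ := mem_gens.1 hm
  obtain ⟨d', hd', hmd'⟩ := mem_gens.1 hm'
  have hp : ∀ y, m y + d y = m' y + d' y := by
    intro y
    exact DFunLike.congr_fun (hmd.trans hmd'.symm) y
  obtain ⟨w, hw, heq⟩ := o.key_lt_iff.1 hlt
  have hdw : d w < d' w := by have := hp w; omega
  -- `w` is the first vertex at which `d` and `d'` differ
  have hpos : ∀ v, d' v < d v → o.pos w < o.pos v := by
    intro v hv
    by_contra hle
    rcases (not_lt.1 hle).lt_or_eq with h | h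
    · have h1 := heq v h
      have h2 := hp v
      omega
    · have := o.inj h
      subst this
      omega
  have hmv : ∀ v, d' v < d v → m v < m' v := by
    intro v hv
    have := hp v
    omega
  rcases DegSeq.exchange_or_surplus hA hd hd' hdw with
    ⟨v, x, hv, hx, hswap⟩ | ⟨v, z, x, t, hv, hz, rfl, hx, hdx⟩
  · exact ⟨v, o.mem_colonSet_of_swap hmd hx hswap (hpos v hv), hmv v hv⟩
  · have hroot : ∀ y, d' y < d y → y ≠ o.root := by
      rintro y hy rfl
      have h1 := hpos _ hy
      have h2 := o.root_le w
      omega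
    obtain ⟨p, hvp, hpv⟩ := o.parent v (hroot v hv)
    obtain ⟨q, hzq, hqz⟩ := o.parent z (hroot z hz)
    -- otherwise `pos v ≤ pos q < pos z ≤ pos p < pos v`
    by_cases h : o.pos q < o.pos v
    · refine ⟨v, o.mem_colonSet_of_swap hmd (hx.succ hzq) ?_ h, hmv v hv⟩
      rw [hdx]; abel
    · refine ⟨z, o.mem_colonSet_of_swap hmd (hx.succ hvp) ?_ (by omega : o.pos p < o.pos z),
        hmv z hz⟩
      rw [hdx]; abel

theorem SearchOrder.exists_swap_of_mem (o : SearchOrder G) {s : ℕ} {m : Fin n →₀ ℕ}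
    (hm : m ∈ gens G s) {v : Fin n} (hv : v ∈ colonSet o.key (gens G s) m) :
    ∃ m' ∈ gens G s, ∃ u, o.pos u < o.pos v ∧ m' + vtx u = m + vtx v := by
  obtain ⟨m', hm', hlt, hle⟩ := mem_colonSet.1 hv
  refine ⟨m', hm', ?_⟩
  obtain ⟨y, hy⟩ := exists_add_of_le hle
  -- by degree reasons the complementary factor is a single variable
  have hdeg : y.degree = 1 := by
    have h := congrArg Finsupp.degree hy
    rw [map_add, map_add, degree_gens hm, degree_gens hm', Finsupp.degree_single] at h
    omega
  obtain ⟨u, rfl⟩ := (Finsupp.sum_eq_one_iff y).1 hdeg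
  refine ⟨u, ?_, hy.symm⟩
  by_contra hnot
  rcases (not_lt.1 hnot).lt_or_eq with h | h
  · exact lt_asymm hlt (o.key_lt_of_swap hy h)
  · have := o.inj h
    subst this
    exact absurd hlt (by rw [add_right_cancel hy]; exact lt_irrefl _)

theorem SearchOrder.root_notMem (o : SearchOrder G) {s : ℕ} {m : Fin n →₀ ℕ}
    (hm : m ∈ gens G s) : o.root ∉ colonSet o.key (gens G s) m := by
  intro h
  obtain ⟨m', _, u, hu, _⟩ := o.exists_swap_of_mem hm h
  exact absurd hu (not_lt.2 (o.root_le u))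

/-- The second vertex of a search order. -/
theorem SearchOrder.exists_second (o : SearchOrder G) (hn : 2 ≤ n) :
    ∃ q, q ≠ o.root ∧ G.Adj o.root q ∧ ∀ v, v ≠ o.root → o.pos q ≤ o.pos v := by
  have hne : (Finset.univ.erase o.root).Nonempty := by
    rw [← Finset.card_pos, Finset.card_erase_of_mem (Finset.mem_univ _), Finset.card_univ,
      Fintype.card_fin]
    omega
  obtain ⟨q, hq, hmin⟩ := Finset.exists_min_image _ o.pos hne
  have hqr : q ≠ o.root := Finset.ne_of_mem_erase hq
  have hmin' : ∀ v, v ≠ o.root → o.pos q ≤ o.pos v := fun v hv => hmin v (by simp [hv])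
  refine ⟨q, hqr, ?_, hmin'⟩
  obtain ⟨p, hqp, hp⟩ := o.parent q hqr
  have : p = o.root := by
    by_contra h
    have := hmin' p h
    omega
  exact (this ▸ hqp).symm

theorem SearchOrder.second_notMem (o : SearchOrder G) {A : Set (Fin n)}
    (hA : ∀ i j, G.Adj i j → (i ∈ A ↔ j ∉ A)) {q : Fin n} (hadj : G.Adj o.root q)
    (hmin : ∀ v, v ≠ o.root → o.pos q ≤ o.pos v) {s : ℕ} {m : Fin n →₀ ℕ}
    (hm : m ∈ gens G s) : q ∉ colonSet o.key (gens G s) m := by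
  classical
  intro h
  obtain ⟨m', hm', u, hu, hswap⟩ := o.exists_swap_of_mem hm h
  have hur : u = o.root := by
    by_contra hne
    have := hmin u hne
    omega
  subst hur
  obtain ⟨d, hd, hmd⟩ := mem_gens.1 hm
  obtain ⟨d', hd', hmd'⟩ := mem_gens.1 hm'
  have hdd : d' + vtx q = d + vtx o.root := by
    apply add_right_cancel (b := m + m')
    calc d' + vtx q + (m + m') = (m' + d') + (m + vtx q) := by abel
      _ = (m + d) + (m' + vtx o.root) := by rw [hmd, hmd', hswap]
      _ = d + vtx o.root + (m + m') := by abel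
  -- both degree sequences have sum `s` on the side `A`, which contains exactly one of the two
  have h1 := hd.sum_side hA
  have h2 := hd'.sum_side hA
  have h3 : ∑ v with v ∈ A, (d' + vtx q) v = ∑ v with v ∈ A, (d + vtx o.root) v := by rw [hdd]
  have h4 := hA _ _ hadj
  simp only [Finsupp.add_apply, Finset.sum_add_distrib, h1, h2, Finsupp.single_apply,
    Finset.sum_ite_eq, Finset.mem_filter, Finset.mem_univ, true_and] at h3
  by_cases hq : q ∈ A <;> simp_all

theorem SearchOrder.card_colonSet_le (o : SearchOrder G) {A : Set (Fin n)}
    (hA : ∀ i j, G.Adj i j → (i ∈ A ↔ j ∉ A)) (hn : 2 ≤ n) {s : ℕ} {m : Fin n →₀ ℕ}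
    (hm : m ∈ gens G s) : (colonSet o.key (gens G s) m).card ≤ n - 2 := by
  obtain ⟨q, hqr, hadj, hmin⟩ := o.exists_second hn
  have hsub : colonSet o.key (gens G s) m ⊆ (Finset.univ.erase o.root).erase q := by
    intro v hv
    simp only [Finset.mem_erase, Finset.mem_univ, and_true]
    exact ⟨fun h => o.second_notMem hA hadj hmin hm (h ▸ hv), fun h => o.root_notMem hm (h ▸ hv)⟩
  refine (Finset.card_le_card hsub).trans ?_
  rw [Finset.card_erase_of_mem (by simp [hqr]), Finset.card_erase_of_mem (Finset.mem_univ _),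
    Finset.card_univ, Fintype.card_fin]
  omega

/-- Multiplying by the generator of an edge enlarges colon sets. -/
theorem SearchOrder.colonSet_subset (o : SearchOrder G) {s : ℕ} {m : Fin n →₀ ℕ}
    (hm : m ∈ gens G s) {i j : Fin n} (hij : G.Adj i j) {m₂ : Fin n →₀ ℕ}
    {d : Fin n →₀ ℕ} (hmd : m + d = s • aexp n)
    (hm₂ : m₂ + (d + vtx i + vtx j) = (s + 1) • aexp n) :
    colonSet o.key (gens G s) m ⊆ colonSet o.key (gens G (s + 1)) m₂ := by
  intro v hv
  obtain ⟨m', hm', u, hu, hswap⟩ := o.exists_swap_of_mem hm hv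
  obtain ⟨d', hd', hmd'⟩ := mem_gens.1 hm'
  refine o.mem_colonSet_of_swap hm₂ (hd'.succ hij) ?_ hu
  apply add_right_cancel (b := m + m')
  calc d' + vtx i + vtx j + vtx v + (m + m')
      = (m' + d') + (m + vtx v) + (vtx i + vtx j) := by abel
    _ = (m + d) + (m' + vtx u) + (vtx i + vtx j) := by rw [hmd, hmd', hswap]
    _ = d + vtx i + vtx j + vtx u + (m + m') := by abel

theorem SearchOrder.exists_card_le (o : SearchOrder G) {s : ℕ} {m : Fin n →₀ ℕ}
    (hm : m ∈ gens G s) {i j : Fin n} (hij : G.Adj i j) :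
    ∃ m₂ ∈ gens G (s + 1),
      (colonSet o.key (gens G s) m).card ≤ (colonSet o.key (gens G (s + 1)) m₂).card := by
  obtain ⟨d, hd, hmd⟩ := mem_gens.1 hm
  obtain ⟨m₂, hm₂, hmd₂⟩ := (hd.succ hij).exists_gen
  exact ⟨m₂, hm₂, Finset.card_le_card (o.colonSet_subset hm hij hmd hmd₂)⟩

/-- As long as a colon set has fewer than `n - 2` elements, multiplication by a suitable edge
generator produces a strictly larger one. -/
theorem SearchOrder.exists_card_lt (o : SearchOrder G) (hn : 2 ≤ n) {s : ℕ} {m : Fin n →₀ ℕ}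
    (hm : m ∈ gens G s) (hcard : (colonSet o.key (gens G s) m).card < n - 2) :
    ∃ m₂ ∈ gens G (s + 1),
      (colonSet o.key (gens G s) m).card < (colonSet o.key (gens G (s + 1)) m₂).card := by
  obtain ⟨q, hqr, hadj, hmin⟩ := o.exists_second hn
  obtain ⟨v, hv, hvnot⟩ : ∃ v ∈ (Finset.univ.erase o.root).erase q,
      v ∉ colonSet o.key (gens G s) m := by
    apply Finset.exists_mem_notMem_of_card_lt_card
    rw [Finset.card_erase_of_mem (by simp [hqr]), Finset.card_erase_of_mem (Finset.mem_univ _),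
      Finset.card_univ, Fintype.card_fin]
    omega
  simp only [Finset.mem_erase, Finset.mem_univ, and_true] at hv
  obtain ⟨p, hvp, hpv⟩ := o.parent v hv.2
  -- a vertex `u` preceding `v` which has the neighbour `p` in common with `v`
  obtain ⟨u, hpu, huv⟩ : ∃ u, G.Adj p u ∧ o.pos u < o.pos v := by
    by_cases hp : p = o.root
    · exact ⟨q, hp ▸ hadj, lt_of_le_of_ne (hmin v hv.2) fun h => hv.1 (o.inj h).symm⟩
    · obtain ⟨u, hu, hlt⟩ := o.parent p hp
      exact ⟨u, hu, hlt.trans hpv⟩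
  obtain ⟨d, hd, hmd⟩ := mem_gens.1 hm
  obtain ⟨m₂, hm₂, hmd₂⟩ := (hd.succ hvp).exists_gen
  refine ⟨m₂, hm₂, Finset.card_lt_card ?_⟩
  refine (Finset.ssubset_iff_of_subset (o.colonSet_subset hm hvp hmd hmd₂)).2 ⟨v, ?_, hvnot⟩
  exact o.mem_colonSet_of_swap hmd₂ (hd.succ hpu) (by abel) huv

/-- The projective dimension of `I_c(G)^s` is the maximal size of a colon set. -/
theorem SearchOrder.pdim_eq (o : SearchOrder G) {A : Set (Fin n)}
    (hA : ∀ i j, G.Adj i j → (i ∈ A ↔ j ∉ A)) (K : Type) [Field K] (s : ℕ) :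
    pdim (compIdeal K n G ^ s) = (gens G s).sup fun m => (colonSet o.key (gens G s) m).card := by
  obtain ⟨h1, h2⟩ := hom_of_linQuot (K := K) o.key o.key_injective (s * n - 2 * s) (gens G s)
    (fun m hm => degree_gens hm) (o.linQuot hA s)
  have hset : {i | ∃ a, Nontrivial (Hmod (compIdeal K n G ^ s) a i)} =
      {i | ∃ m ∈ gens G s, i ≤ (colonSet o.key (gens G s) m).card} := by
    ext i
    simp only [Set.mem_ofPred_eq, nontrivial_Hmod_iff, upKoszul_eq]
    constructor
    · rintro ⟨a, ha⟩
      exact (h1 i a ha).2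
    · rintro ⟨m, hm, hi⟩
      obtain ⟨T, hT, rfl⟩ := Finset.exists_subset_card_eq hi
      exact ⟨_, h2 m hm T hT⟩
  rw [pdim, hset]
  rcases (gens G s).eq_empty_or_nonempty with he | hne
  · simp [he]
  · obtain ⟨m, hm, hmax⟩ := Finset.exists_mem_eq_sup _ hne
      fun m => (colonSet o.key (gens G s) m).card
    rw [hmax]
    refine IsGreatest.csSup_eq ⟨⟨m, hm, le_rfl⟩, ?_⟩
    rintro i ⟨m', hm', hi⟩
    rw [← hmax]
    exact hi.trans (Finset.le_sup (f := fun m => (colonSet o.key (gens G s) m).card) hm')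

end ColonSets

/-- For a connected bipartite graph `G` with `n` vertices,
`pd(I_c(G)^s)` strictly increases in `s` until it reaches its maximal value
`n - 2`. -/
theorem pdim_compIdeal_pow_strict_mono_bipartite
    (K : Type) [Field K] (n : ℕ) (G : SimpleGraph (Fin n)) (hconn : G.Connected)
    (hbip : ∃ A : Set (Fin n), ∀ i j, G.Adj i j → (i ∈ A ↔ j ∉ A)) :
    (∀ s : ℕ, 1 ≤ s → (pdim (compIdeal K n G ^ s) : ℤ) ≤ (n : ℤ) - 3 →
      pdim (compIdeal K n G ^ s) + 1 ≤ pdim (compIdeal K n G ^ (s + 1))) ∧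
    (∃ s0 : ℕ, ∀ s : ℕ, s0 ≤ s → pdim (compIdeal K n G ^ s) = n - 2) := by
  obtain ⟨A, hA⟩ := hbip
  obtain ⟨o⟩ := exists_searchOrder hconn
  simp only [o.pdim_eq hA]
  set f : ℕ → ℕ := fun s => (gens G s).sup fun m => (colonSet o.key (gens G s) m).card with hf
  have hmax : ∀ s, (gens G s).Nonempty →
      ∃ m ∈ gens G s, f s = (colonSet o.key (gens G s) m).card := fun s hs =>
    Finset.exists_mem_eq_sup _ hs _
  have hle : ∀ s, ∀ m ∈ gens G s, (colonSet o.key (gens G s) m).card ≤ f s := fun s m hm =>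
    Finset.le_sup (f := fun m => (colonSet o.key (gens G s) m).card) hm
  rcases Nat.lt_or_ge n 2 with hn | hn
  · -- on a single vertex there are no edges, and all positive powers vanish
    refine ⟨fun s _ h => ?_, 1, fun s hs => ?_⟩
    · have : (0 : ℤ) ≤ (f s : ℤ) := Int.natCast_nonneg _
      have h' : (f s : ℤ) ≤ (n : ℤ) - 3 := h
      omega
    · have he : gens G s = ∅ := by
        rw [Finset.eq_empty_iff_forall_notMem]
        intro m hm
        obtain ⟨d, hd, _⟩ := mem_gens.1 hm
        cases hd with
        | zero => omega
        | @succ _ _ i j _ hij => exact hij.ne (Fin.ext (by omega))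
      rw [he, Finset.sup_empty]
      simp only [bot_eq_zero]
      omega
  · obtain ⟨q, -, hadj, -⟩ := o.exists_second hn
    have hne : ∀ s, (gens G s).Nonempty := by
      intro s
      have : ∃ d, DegSeq G s d := by
        induction s with
        | zero => exact ⟨0, DegSeq.zero⟩
        | succ s ih =>
          obtain ⟨d, hd⟩ := ih
          exact ⟨_, hd.succ hadj⟩
      obtain ⟨d, hd⟩ := this
      obtain ⟨m, hm, -⟩ := hd.exists_gen
      exact ⟨m, hm⟩
    have hub : ∀ s, f s ≤ n - 2 := fun s => by
      obtain ⟨m, hm, h⟩ := hmax s (hne s)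
      rw [h]
      exact o.card_colonSet_le hA hn hm
    have hmono : ∀ s, f s ≤ f (s + 1) := fun s => by
      obtain ⟨m, hm, h⟩ := hmax s (hne s)
      obtain ⟨m₂, hm₂, h₂⟩ := o.exists_card_le hm hadj
      rw [h]
      exact h₂.trans (hle _ m₂ hm₂)
    have hstrict : ∀ s, f s < n - 2 → f s < f (s + 1) := fun s hs => by
      obtain ⟨m, hm, h⟩ := hmax s (hne s)
      rw [h] at hs ⊢
      obtain ⟨m₂, hm₂, h₂⟩ := o.exists_card_lt hn hm hs
      exact h₂.trans_le (hle _ m₂ hm₂)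
    refine ⟨fun s _ h => ?_, n, fun s hs => ?_⟩
    · have h' : (f s : ℤ) ≤ (n : ℤ) - 3 := h
      exact hstrict s (by omega)
    · have hmin : ∀ t, min t (n - 2) ≤ f t := by
        intro t
        induction t with
        | zero => simp
        | succ t ih =>
          have h1 := hmono t
          have h2 := hstrict t
          omega
      have h1 := hmin s
      have h2 := hub s
      have h3 : f s = n - 2 := by omega
      exact h3

end Paper
end

section
/- Let G be a finite simple connected bipartite graph with n vertices. Then dstab(I_c(G)) ≤ n−2, where dstab denotes the index of depth stability. Moreover, equality dstab(I_c(G)) = n−2 holds if and only if G is a tree. -/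
/-!
The powers of `I = I_c(G)` are analysed through the monomial valuations
`x^u ↦ ∑_{v ∈ T} u v` of the independent sets `T` of `G`. A Hall-type argument
(`exists_edge_cover`) shows that `x^u ∈ I^k` if and only if `(|T| - 1) k ≤ ∑_{v ∈ T} u v` for all
independent `T` (`mem_pow_iff`). Since an edge `pq` is contained in no independent set,
`x_p - x_q` is a nonzerodivisor modulo every `I^k`, so the depth of `S/I^k` is at least one.

Depth at most one. Suppose there are `k + 1` edges such that the two sides of the bipartition are
the only independent sets meeting all of them (`Good`), and let `a = k - deg` for the degrees in
this family. The inequality for `x^a` fails, by one, exactly for the two sides of the bipartition.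
Hence multiplication by `x^a` on the variables of one side, and zero on those of the other, is a
homomorphism `𝔪 → S/I^k` that is not multiplication by an element, which is impossible in depth
two (`length_le_one_of_good`; a side with a single vertex needs a variant). The edges of a spanning
tree give such a family for all `k ≥ n - 2` (`good_of_connected`). If `G` has a cycle, one edge of
a spanning tree can be spared, and `k ≥ n - 3` suffices (`good_of_not_isTree`).

Depth at least two. Let `G` be a tree, `k ≤ n - 3` and `pq` an edge. Then `x_p - x_q` followed by
the sum of the variables other than `x_q` is a regular sequence on `S/I^k`. Identifying `x_q` with
`x_p`, the valuations of `I^k` that agree on `x_p` and `x_q` and vanish on some variable can be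
cancelled; a monomial satisfying the resulting inequalities but outside `I^k + (x_p - x_q)` would
yield a family of `k + 1` edges as above, whereas in a tree such a family contains all `n - 1`
edges (`le_of_isTree`, `exists_shift`, `exists_mem_of_isTree`).

Thus the depth is one from `k = n - 2` on, and it already equals one at `k = n - 3 ≥ 1` exactly
when `G` is not a tree; for `n = 3` the graph is a path and `n - 2 = 1` is the least index allowed.
-/

open MvPolynomial

namespace Paper

noncomputable section

variable (K : Type) [Field K] (n : ℕ)

variable {n}

variable {K}

variable (K n)

variable {K} {n}

/-- The depth of `S/J`: the longest length of a regular sequence on `S/J`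
consisting of elements of the graded maximal ideal. -/
def sdepth (J : Ideal (S K n)) : ℕ :=
  sSup {k | ∃ rs : List (S K n), rs.length = k ∧ (∀ r ∈ rs, r ∈ maxIdl K n) ∧
    RingTheory.Sequence.IsRegular ((S K n) ⧸ J) rs}

/-- The index of depth stability of `I`: the least `k₀ > 0` such that
`depth (S/I^k) = depth (S/I^{k₀})` for all `k ≥ k₀`. -/
def dstab (I : Ideal (S K n)) : ℕ :=
  sInf {k0 | 0 < k0 ∧ ∀ k, k0 ≤ k → sdepth (I ^ k) = sdepth (I ^ k0)}

end

/-! ### Edge covers in bipartite graphs -/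

/-- `T` is an independent set of vertices of `G`. -/
def Ind {n : ℕ} (G : SimpleGraph (Fin n)) (T : Finset (Fin n)) : Prop :=
  ∀ i ∈ T, ∀ j ∈ T, ¬ G.Adj i j

/-- The degree of `v` in the multigraph with the `N` edges `{α i, β i}`. -/
def ldeg {n N : ℕ} (α β : Fin N → Fin n) (v : Fin n) : ℕ :=
  ∑ i, ((if α i = v then 1 else 0) + (if β i = v then 1 else 0))

theorem sum_ldeg {n N : ℕ} (α β : Fin N → Fin n) (T : Finset (Fin n)) :
    ∑ v ∈ T, ldeg α β v = ∑ i, ((if α i ∈ T then 1 else 0) + (if β i ∈ T then 1 else 0)) := by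
  unfold ldeg
  rw [Finset.sum_comm]
  refine Finset.sum_congr rfl fun i _ => ?_
  rw [Finset.sum_add_distrib]
  simp

theorem sum_ldeg_le {n N : ℕ} {G : SimpleGraph (Fin n)} {α β : Fin N → Fin n}
    (hadj : ∀ i, G.Adj (α i) (β i)) {T : Finset (Fin n)} (hT : Ind G T) :
    ∑ v ∈ T, ldeg α β v ≤ N := by
  rw [sum_ldeg]
  calc _ ≤ ∑ _i : Fin N, 1 := by
        refine Finset.sum_le_sum fun i _ => ?_
        have h2 : α i ∈ T → β i ∉ T := fun h h' => hT _ h _ h' (hadj i)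
        split_ifs with h1 h3 <;> simp_all
    _ = N := by simp

theorem sum_ldeg_eq {n N : ℕ} {G : SimpleGraph (Fin n)} {α β : Fin N → Fin n}
    (hadj : ∀ i, G.Adj (α i) (β i)) {T : Finset (Fin n)} (hT : Ind G T)
    (hmeet : ∀ i, α i ∈ T ∨ β i ∈ T) :
    ∑ v ∈ T, ldeg α β v = N := by
  rw [sum_ldeg]
  calc _ = ∑ _i : Fin N, 1 := by
        refine Finset.sum_congr rfl fun i _ => ?_
        have h2 : α i ∈ T → β i ∉ T := fun h h' => hT _ h _ h' (hadj i)
        have h3 := hmeet i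
        split_ifs with h1 h3 <;> simp_all
    _ = N := by simp

theorem meet_of_sum_ldeg {n N : ℕ} {G : SimpleGraph (Fin n)} {α β : Fin N → Fin n}
    (hadj : ∀ i, G.Adj (α i) (β i)) {T : Finset (Fin n)} (hT : Ind G T)
    (hsum : N ≤ ∑ v ∈ T, ldeg α β v) (i : Fin N) : α i ∈ T ∨ β i ∈ T := by
  by_contra hcon
  push Not at hcon
  rw [sum_ldeg] at hsum
  have : ∑ i, ((if α i ∈ T then 1 else 0) + (if β i ∈ T then 1 else 0)) < ∑ _i : Fin N, 1 := by
    refine Finset.sum_lt_sum (fun i _ => ?_) ⟨i, Finset.mem_univ _, by simp [hcon.1, hcon.2]⟩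
    have h2 : α i ∈ T → β i ∉ T := fun h h' => hT _ h _ h' (hadj i)
    split_ifs with h1 h3 <;> simp_all
  simp at this hsum
  omega

/-- A map out of `Fin N` with prescribed fibre sizes over `A`; the surplus indices go to `none`. -/
theorem exists_fiber {n : ℕ} (A : Finset (Fin n)) (c : Fin n → ℕ) (N : ℕ)
    (h : ∑ v ∈ A, c v ≤ N) :
    ∃ a : Fin N → Option (Fin n),
      (∀ v ∈ A, (Finset.univ.filter fun i => a i = some v).card = c v) ∧
      ∀ i v, a i = some v → v ∈ A := by
  classical
  let c' : Option (Fin n) → ℕ := fun o =>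
    o.elim (N - ∑ v ∈ A, c v) (fun v => if v ∈ A then c v else 0)
  have hcard : Fintype.card (Σ o, Fin (c' o)) = N := by
    rw [Fintype.card_sigma, Fintype.sum_option]
    simp only [Fintype.card_fin]
    simp only [c', Option.elim, Finset.sum_ite_mem, Finset.univ_inter]
    omega
  let e := Fintype.equivFinOfCardEq hcard
  refine ⟨fun i => (e.symm i).1, fun v hv => ?_, fun i v hi => ?_⟩
  · have : (Finset.univ.filter fun i => (e.symm i).1 = some v).card = c' (some v) := by
      rw [← Fintype.card_subtype, ← Fintype.card_fin (c' (some v))]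
      refine Fintype.card_congr ?_
      exact (e.symm.subtypeEquiv (q := fun x => x.1 = some v) (fun a => Iff.rfl)).trans
        (Equiv.sigmaSubtype (some v))
    rw [this]
    simp [c', hv]
  · by_contra hv
    have hpos : 0 < c' (e.symm i).1 := (Nat.zero_le _).trans_lt (e.symm i).2.2
    simp only at hi
    rw [hi] at hpos
    simp [c', hv] at hpos

/-- Weighted edge cover duality for bipartite graphs: the demand `c` can be covered by `N` edges
as soon as the demand of every independent set is at most `N`. The demands on the two sides are
spread over `N` slots each, with unused slots compatible with everything, and Hall's theorem
pairs the slots: a violator `s` on one side, with vertex set `X`, would make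
`X ∪ (Aᶜ \ N(X))` an independent set of too large demand. -/
theorem exists_edge_cover {n : ℕ} {G : SimpleGraph (Fin n)} {A : Finset (Fin n)}
    (hA : ∀ i j, G.Adj i j → (i ∈ A ↔ j ∉ A)) (hdeg : ∀ v, ∃ w, G.Adj v w) (v₀ : Fin n)
    (c : Fin n → ℕ) (N : ℕ) (hc : ∀ T, Ind G T → ∑ v ∈ T, c v ≤ N) :
    ∃ α β : Fin N → Fin n, (∀ i, G.Adj (α i) (β i)) ∧ ∀ v, c v ≤ ldeg α β v := by
  classical
  have hIA : Ind G A := fun i hi j hj h => ((hA i j h).1 hi) hj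
  have hIB : Ind G Aᶜ := fun i hi j hj h => by
    have := hA i j h
    simp at hi hj
    tauto
  obtain ⟨a, ha, ha'⟩ := exists_fiber A c N (hc _ hIA)
  obtain ⟨b, hb, hb'⟩ := exists_fiber Aᶜ c N (hc _ hIB)
  let t : Fin N → Finset (Fin N) := fun i =>
    Finset.univ.filter fun j => ∀ v w, a i = some v → b j = some w → G.Adj v w
  have hall : ∀ s : Finset (Fin N), s.card ≤ (s.biUnion t).card := by
    intro s
    rcases s.eq_empty_or_nonempty with rfl | hse
    · simp
    by_cases hs : ∃ i ∈ s, a i = none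
    · obtain ⟨i, his, hi⟩ := hs
      have hsub : (Finset.univ : Finset (Fin N)) ⊆ s.biUnion t := by
        intro j _
        exact Finset.mem_biUnion.2 ⟨i, his, by simp [t, hi]⟩
      exact (Finset.card_le_card (Finset.subset_univ _)).trans (Finset.card_le_card hsub)
    · push Not at hs
      let X : Finset (Fin n) := A.filter fun v => ∃ i ∈ s, a i = some v
      let Y : Finset (Fin n) := Aᶜ.filter fun w => ∀ v ∈ X, ¬ G.Adj v w
      have hXY : Disjoint X Y := by
        rw [Finset.disjoint_left]
        intro v hv hv'
        simp [X, Y] at hv hv'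
        exact hv'.1 hv.1
      have hI : Ind G (X ∪ Y) := by
        intro i hi j hj hij
        have hAij := hA i j hij
        rcases Finset.mem_union.1 hi with h1 | h1 <;> rcases Finset.mem_union.1 hj with h2 | h2
        · simp [X] at h1 h2; tauto
        · exact (Finset.mem_filter.1 h2).2 i h1 hij
        · exact (Finset.mem_filter.1 h1).2 j h2 hij.symm
        · simp [Y] at h1 h2; tauto
      have hsum := hc _ hI
      rw [Finset.sum_union hXY] at hsum
      have h1 : s.card ≤ ∑ v ∈ X, c v := by
        have hsub : s ⊆ X.biUnion fun v => Finset.univ.filter fun i => a i = some v := by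
          intro i hi
          obtain ⟨v, hv⟩ := Option.ne_none_iff_exists'.1 (hs i hi)
          simp only [Finset.mem_biUnion, Finset.mem_filter, Finset.mem_univ, true_and]
          exact ⟨v, Finset.mem_filter.2 ⟨ha' i v hv, i, hi, hv⟩, hv⟩
        refine (Finset.card_le_card hsub).trans (Finset.card_biUnion_le.trans ?_)
        exact Finset.sum_le_sum fun v hv => (ha v (Finset.mem_filter.1 hv).1).le
      have h2 : ((s.biUnion t)ᶜ).card ≤ ∑ v ∈ Y, c v := by
        have hsub : (s.biUnion t)ᶜ ⊆ Y.biUnion fun v => Finset.univ.filter fun i => b i = some v := by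
          intro j hj
          simp only [Finset.mem_compl, Finset.mem_biUnion, not_exists, not_and] at hj
          obtain ⟨i₀, hi₀⟩ := hse
          have := hj i₀ hi₀
          simp only [t, Finset.mem_filter, Finset.mem_univ, true_and, not_forall] at this
          obtain ⟨v, w, hv, hw, -⟩ := this
          simp only [Finset.mem_biUnion, Finset.mem_filter, Finset.mem_univ, true_and]
          refine ⟨w, Finset.mem_filter.2 ⟨hb' j w hw, ?_⟩, hw⟩
          intro v' hv' hadj
          obtain ⟨-, i, hi, hiv⟩ := Finset.mem_filter.1 hv'
          refine hj i hi ?_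
          simp only [t, Finset.mem_filter, Finset.mem_univ, true_and]
          intro v'' w' e1 e2
          rw [hiv] at e1; rw [hw] at e2
          cases e1; cases e2
          exact hadj
        refine (Finset.card_le_card hsub).trans (Finset.card_biUnion_le.trans ?_)
        exact Finset.sum_le_sum fun v hv => (hb v (Finset.mem_filter.1 hv).1).le
      have h3 := Finset.card_add_card_compl (s.biUnion t)
      simp only [Fintype.card_fin] at h3
      omega
  obtain ⟨f, hf, hft⟩ := (Finset.all_card_le_biUnion_card_iff_exists_injective t).1 hall
  have hsurj : Function.Surjective f := Finite.surjective_of_injective hf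
  have key : ∀ i, ∃ p : Fin n × Fin n, G.Adj p.1 p.2 ∧ (∀ v, a i = some v → p.1 = v) ∧
      ∀ w, b (f i) = some w → p.2 = w := by
    intro i
    have h := hft i
    simp only [t, Finset.mem_filter, Finset.mem_univ, true_and] at h
    rcases hai : a i with _ | v <;> rcases hbi : b (f i) with _ | w
    · obtain ⟨w, hw⟩ := hdeg v₀
      exact ⟨(v₀, w), hw, by simp, by simp⟩
    · obtain ⟨v, hv⟩ := hdeg w
      exact ⟨(v, w), hv.symm, by simp, by simp⟩
    · obtain ⟨w, hw⟩ := hdeg v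
      exact ⟨(v, w), hw, by simp, by simp⟩
    · exact ⟨(v, w), h v w hai hbi, by simp, by simp⟩
  choose p hp1 hp2 hp3 using key
  refine ⟨fun i => (p i).1, fun i => (p i).2, hp1, fun v => ?_⟩
  unfold ldeg
  rw [Finset.sum_add_distrib, ← Finset.card_filter, ← Finset.card_filter]
  by_cases hv : v ∈ A
  · rw [← ha v hv]
    refine le_add_right (Finset.card_le_card ?_)
    intro i hi
    simp only [Finset.mem_filter, Finset.mem_univ, true_and] at hi ⊢
    exact hp2 i v hi
  · rw [← hb v (Finset.mem_compl.2 hv)]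
    refine le_add_left ?_
    refine Finset.card_le_card_of_surjOn f ?_
    intro j hj
    obtain ⟨i, rfl⟩ := hsurj j
    simp only [Finset.coe_filter, Finset.mem_univ, true_and, Set.mem_ofPred_eq] at hj
    exact ⟨i, by simpa using hp3 i v hj, rfl⟩

/-! ### Witnessing edge families -/

/-- There are `k + 1` edges of `G`, repetitions allowed, such that the only independent sets
meeting all of them are the two sides `A` and `Aᶜ` of the bipartition. Such a family of edges is
called witnessing below. -/
def Good {n : ℕ} (G : SimpleGraph (Fin n)) (A : Finset (Fin n)) (k : ℕ) : Prop :=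
  ∃ α β : Fin (k + 1) → Fin n, (∀ i, G.Adj (α i) (β i)) ∧
    ∀ T, Ind G T → (∀ i, α i ∈ T ∨ β i ∈ T) → T = A ∨ T = Aᶜ

theorem good_of_edges {n : ℕ} {G : SimpleGraph (Fin n)} {A : Finset (Fin n)} {k : ℕ}
    (F : Finset (Sym2 (Fin n))) (hne : F.Nonempty) (hF : ∀ e ∈ F, e ∈ G.edgeSet)
    (hcard : F.card ≤ k + 1)
    (h : ∀ T, Ind G T → (∀ v w, s(v, w) ∈ F → v ∈ T ∨ w ∈ T) → T = A ∨ T = Aᶜ) :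
    Good G A k := by
  classical
  have : Nonempty F := hne.coe_sort
  obtain ⟨ι⟩ := Function.Embedding.nonempty_of_card_le
    (α := F) (β := Fin (k + 1)) (by simpa using hcard)
  let e : Fin (k + 1) → F := Function.invFun ι
  have he : Function.Surjective e := Function.invFun_surjective ι.injective
  have hout : ∀ i, s((e i).1.out.1, (e i).1.out.2) = (e i).1 := fun i => Quot.out_eq _
  refine ⟨fun i => (e i).1.out.1, fun i => (e i).1.out.2, fun i => ?_, fun T hT hm => ?_⟩
  · rw [← SimpleGraph.mem_edgeSet, hout]
    exact hF _ (e i).2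
  · refine h T hT fun v w hvw => ?_
    obtain ⟨i, hi⟩ := he ⟨s(v, w), hvw⟩
    have h1 := hout i
    have h2 := hm i
    simp only at h2
    rw [hi] at h1 h2
    simp only [Sym2.eq_iff] at h1
    rcases h1 with ⟨h1, h3⟩ | ⟨h1, h3⟩ <;> rw [h1, h3] at h2 <;> tauto

theorem iff_of_reachable {V : Type*} {H : SimpleGraph V} {P : V → Prop}
    (hP : ∀ v w, H.Adj v w → (P v ↔ P w)) {v w : V} (h : H.Reachable v w) : P v ↔ P w := by
  obtain ⟨p⟩ := h
  induction p with
  | nil => rfl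
  | cons hadj _ ih => exact (hP _ _ hadj).trans ih

theorem side_of_const {n : ℕ} {H : SimpleGraph (Fin n)} (hH : H.Connected) {A T : Finset (Fin n)}
    (hP : ∀ v w, H.Adj v w → ((v ∈ T ↔ v ∈ A) ↔ (w ∈ T ↔ w ∈ A))) : T = A ∨ T = Aᶜ := by
  obtain ⟨v₀⟩ := hH.nonempty
  have hall := fun w => iff_of_reachable (P := fun v => (v ∈ T ↔ v ∈ A)) hP (hH.preconnected v₀ w)
  by_cases h : v₀ ∈ T ↔ v₀ ∈ A
  · left
    ext w
    exact (hall w).1 h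
  · right
    ext w
    have := mt (hall w).2 h
    rw [Finset.mem_compl]
    tauto

/-- An independent set meeting an edge agrees with `A` at both of its ends or at neither. -/
theorem const_of_meet {n : ℕ} {G : SimpleGraph (Fin n)} {A T : Finset (Fin n)}
    (hA : ∀ i j, G.Adj i j → (i ∈ A ↔ j ∉ A)) (hT : Ind G T) {v w : Fin n} (hvw : G.Adj v w)
    (hm : v ∈ T ∨ w ∈ T) : (v ∈ T ↔ v ∈ A) ↔ (w ∈ T ↔ w ∈ A) := by
  have h1 := hA v w hvw
  have h2 : v ∈ T → w ∉ T := fun h h' => hT _ h _ h' hvw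
  tauto

/-- The edges of a spanning tree form a witnessing family. -/
theorem good_of_connected {n : ℕ} (hn : 2 ≤ n) {G : SimpleGraph (Fin n)} {A : Finset (Fin n)}
    (hA : ∀ i j, G.Adj i j → (i ∈ A ↔ j ∉ A)) (hG : G.Connected) {k : ℕ} (hk : n - 2 ≤ k) :
    Good G A k := by
  classical
  obtain ⟨τ, hle, hτ⟩ := hG.exists_isTree_le
  have hcard := hτ.card_edgeFinset
  rw [Fintype.card_fin] at hcard
  refine good_of_edges τ.edgeFinset (Finset.card_pos.1 (by omega)) (fun e he => ?_) (by omega)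
    fun T hT hm => ?_
  · exact SimpleGraph.edgeSet_mono hle (SimpleGraph.mem_edgeFinset.1 he)
  · refine side_of_const hτ.connected (T := T) fun v w hvw => ?_
    exact const_of_meet hA hT (hle hvw) (hm v w (by simpa using hvw))

/-- If `G` has a cycle, one edge fewer suffices. Let `τ` be a spanning tree avoiding an edge `pq`
of `G` and let `p, v₁, v₂, …, q` be the path in `τ`; then `v₁v₂` can be dropped from `τ`: an
independent set `T` meeting the other edges but switching sides between `v₁` and `v₂` would
contain both of them, or both of `p` and `q`. -/
theorem good_of_not_isTree {n : ℕ} {G : SimpleGraph (Fin n)} {A : Finset (Fin n)}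
    (hA : ∀ i j, G.Adj i j → (i ∈ A ↔ j ∉ A)) (hG : G.Connected) (hnt : ¬ G.IsTree) :
    4 ≤ n ∧ ∀ k, n - 3 ≤ k → Good G A k := by
  classical
  have hac : ¬ G.IsAcyclic := fun h => hnt ⟨hG, h⟩
  rw [SimpleGraph.isAcyclic_iff_forall_isBridge] at hac
  push Not at hac
  obtain ⟨e, he, hb⟩ := hac
  induction e with | _ p q
  rw [SimpleGraph.mem_edgeSet] at he
  have hG' := hG.connected_delete_edge_of_not_isBridge hb
  obtain ⟨τ, hle', hτ⟩ := hG'.exists_isTree_le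
  have hle : τ ≤ G := hle'.trans (SimpleGraph.deleteEdges_le _)
  have hpq : ¬ τ.Adj p q := fun h => by simpa using hle' h
  obtain ⟨W, hW⟩ := (hτ.connected.preconnected p q).exists_isPath
  cases W with
  | nil => exact absurd he (by simp)
  | @cons _ v₁ _ h1 W1 =>
    cases W1 with
    | nil => exact absurd h1 hpq
    | @cons _ v₂ _ h2 W2 =>
      have hnd := hW.support_nodup
      simp only [SimpleGraph.Walk.support_cons, List.nodup_cons, List.mem_cons, not_or] at hnd
      have hpv1 : p ≠ v₁ := hnd.1.1
      have hpv2 : p ≠ v₂ := fun h => hnd.1.2 (h ▸ W2.start_mem_support)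
      have hv1q : v₁ ≠ q := fun h => hnd.2.1 (h ▸ W2.end_mem_support)
      have a1 := hA _ _ (hle h1)
      have a2 := hA _ _ (hle h2)
      have a3 := hA _ _ he
      have hv2q : v₂ ≠ q := by rintro rfl; tauto
      have hpq' : p ≠ q := he.ne
      have hv12 : v₁ ≠ v₂ := h2.ne
      have hn4 : 4 ≤ n := by
        have : ({p, v₁, v₂, q} : Finset (Fin n)).card = 4 := by
          rw [Finset.card_insert_of_notMem, Finset.card_insert_of_notMem,
            Finset.card_insert_of_notMem, Finset.card_singleton] <;> simp_all
        calc 4 = ({p, v₁, v₂, q} : Finset (Fin n)).card := this.symm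
          _ ≤ n := by simpa using Finset.card_le_univ ({p, v₁, v₂, q} : Finset (Fin n))
      refine ⟨hn4, fun k hk => ?_⟩
      have hcard := hτ.card_edgeFinset
      rw [Fintype.card_fin] at hcard
      have hmem : s(v₁, v₂) ∈ τ.edgeFinset := by simpa using h2
      have hcard' := Finset.card_erase_of_mem hmem
      refine good_of_edges (τ.edgeFinset.erase s(v₁, v₂)) (Finset.card_pos.1 (by omega))
        (fun e he => ?_) (by omega) fun T hT hm => ?_
      · exact SimpleGraph.edgeSet_mono hle
          (SimpleGraph.mem_edgeFinset.1 (Finset.mem_of_mem_erase he))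
      have hc : ∀ v w, (τ.deleteEdges {s(v₁, v₂)}).Adj v w →
          ((v ∈ T ↔ v ∈ A) ↔ (w ∈ T ↔ w ∈ A)) := by
        intro v w hvw
        rw [SimpleGraph.deleteEdges_adj] at hvw
        refine const_of_meet hA hT (hle hvw.1) (hm v w ?_)
        rw [Finset.mem_erase]
        exact ⟨by simpa using hvw.2, by simpa using hvw.1⟩
      have b1 : (p ∈ T ↔ p ∈ A) ↔ (v₁ ∈ T ↔ v₁ ∈ A) := by
        refine hc _ _ ?_
        rw [SimpleGraph.deleteEdges_adj]
        refine ⟨h1, ?_⟩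
        simp [hpv1, hpv2]
      have b2 : (v₂ ∈ T ↔ v₂ ∈ A) ↔ (q ∈ T ↔ q ∈ A) := by
        refine iff_of_reachable (P := fun v => (v ∈ T ↔ v ∈ A)) hc ?_
        rw [SimpleGraph.reachable_deleteEdges_iff_exists_walk]
        exact ⟨W2, fun h => hnd.2.1 (W2.fst_mem_support_of_mem_edges h)⟩
      have b3 : (v₁ ∈ T ↔ v₁ ∈ A) ↔ (v₂ ∈ T ↔ v₂ ∈ A) := by
        have t1 : v₁ ∈ T → v₂ ∉ T := fun h h' => hT _ h _ h' (hle h2)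
        have t2 : p ∈ T → q ∉ T := fun h h' => hT _ h _ h' he
        clear hcard hcard' hnd hc hm hle hle'
        grind
      refine side_of_const hτ.connected (T := T) fun v w hvw => ?_
      by_cases hs : s(v, w) = s(v₁, v₂)
      · simp only [Sym2.eq_iff] at hs
        rcases hs with ⟨rfl, rfl⟩ | ⟨rfl, rfl⟩
        · exact b3
        · exact b3.symm
      · refine hc v w ?_
        rw [SimpleGraph.deleteEdges_adj]
        exact ⟨hvw, hs⟩

/-- In a tree, a witnessing family contains every edge: if `e` were missing, exchanging the two
sides in one component of `G - e` gives a third independent set meeting the whole family. -/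
theorem le_of_isTree {n N : ℕ} {G : SimpleGraph (Fin n)} {A : Finset (Fin n)}
    (hA : ∀ i j, G.Adj i j → (i ∈ A ↔ j ∉ A)) (hG : G.IsTree) {α β : Fin N → Fin n}
    (hadj : ∀ i, G.Adj (α i) (β i))
    (h : ∀ T, Ind G T → (∀ i, α i ∈ T ∨ β i ∈ T) → T = A ∨ T = Aᶜ) : n ≤ N + 1 := by
  classical
  have key : ∀ v w, G.Adj v w → v ∉ A → ∃ i, s(α i, β i) = s(v, w) := by
    intro v w hvw hv
    by_contra hcon
    push Not at hcon
    let D := G.deleteEdges {s(v, w)}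
    have hb : ¬ D.Reachable v w :=
      SimpleGraph.isAcyclic_iff_forall_isBridge.1 hG.isAcyclic (e := s(v, w)) (by simpa using hvw)
    have hw : w ∈ A := by
      have := hA v w hvw
      tauto
    let T : Finset (Fin n) := Finset.univ.filter fun x => x ∈ A ↔ D.Reachable v x
    have hmT : ∀ x, x ∈ T ↔ (x ∈ A ↔ D.Reachable v x) := by simp [T]
    have hvv : D.Reachable v v := SimpleGraph.Reachable.refl _
    have hvT : v ∉ T := by rw [hmT]; tauto
    have hwT : w ∉ T := by rw [hmT]; tauto
    have hD : ∀ x y, G.Adj x y → s(x, y) ≠ s(v, w) → (D.Reachable v x ↔ D.Reachable v y) := by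
      intro x y hxy hne
      have hxy' : D.Adj x y := by
        rw [SimpleGraph.deleteEdges_adj]
        exact ⟨hxy, hne⟩
      exact ⟨fun h => h.trans hxy'.reachable, fun h => h.trans hxy'.symm.reachable⟩
    have hI : Ind G T := by
      intro x hx y hy hxy
      by_cases hs : s(x, y) = s(v, w)
      · simp only [Sym2.eq_iff] at hs
        rcases hs with ⟨rfl, rfl⟩ | ⟨rfl, rfl⟩
        · exact hvT hx
        · exact hwT hx
      · have h1 := hD x y hxy hs
        have h2 := hA x y hxy
        rw [hmT] at hx hy
        tauto
    rcases h T hI (fun i => by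
      have h1 := hD _ _ (hadj i) (hcon i)
      have h2 := hA _ _ (hadj i)
      rw [hmT, hmT]
      tauto) with h1 | h1
    · exact hwT (h1 ▸ hw)
    · exact hvT (h1 ▸ Finset.mem_compl.2 hv)
  have hsub : G.edgeFinset ⊆ Finset.univ.image fun i => s(α i, β i) := by
    intro e he
    induction e with | _ v w
    have hvw : G.Adj v w := by simpa using he
    have h1 := hA v w hvw
    by_cases hv : v ∈ A
    · obtain ⟨i, hi⟩ := key w v hvw.symm (h1.1 hv)
      exact Finset.mem_image.2 ⟨i, Finset.mem_univ _, hi.trans Sym2.eq_swap⟩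
    · obtain ⟨i, hi⟩ := key v w hvw hv
      exact Finset.mem_image.2 ⟨i, Finset.mem_univ _, hi⟩
  have hcard := hG.card_edgeFinset
  rw [Fintype.card_fin] at hcard
  have h1 := (Finset.card_le_card hsub).trans Finset.card_image_le
  rw [Finset.card_fin] at h1
  omega

/-! ### Monomial valuations -/

/-- The weight of the exponent vector `u` with respect to `w`. -/
def wdot {n : ℕ} (w : Fin n → ℕ) (u : Fin n →₀ ℕ) : ℕ := ∑ v, w v * u v

/-- All monomials of `f` have `w`-weight at least `m`. -/
def OrdGE {K : Type} [Field K] {n : ℕ} (w : Fin n → ℕ) (m : ℕ) (f : S K n) : Prop :=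
  ∀ u ∈ f.support, m ≤ wdot w u

/-- The substitution `x_v ↦ x_v t^{w_v}`, which turns the `w`-weight into the `t`-adic order. -/
noncomputable def wsub {K : Type} [Field K] {n : ℕ} (w : Fin n → ℕ) :
    S K n →ₐ[K] Polynomial (S K n) :=
  aeval fun v => Polynomial.C (X v) * Polynomial.X ^ w v

section
variable {K : Type} [Field K] {n : ℕ}

theorem wsub_monomial (w : Fin n → ℕ) (u : Fin n →₀ ℕ) (c : K) :
    wsub w (monomial u c : S K n) = Polynomial.C (monomial u c) * Polynomial.X ^ wdot w u := by
  unfold wsub wdot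
  rw [aeval_monomial, Finsupp.prod_fintype _ _ (by simp)]
  simp only [mul_pow, Finset.prod_mul_distrib, ← pow_mul, Finset.prod_pow_eq_pow_sum]
  rw [← mul_assoc]
  congr 1
  rw [monomial_eq, Finsupp.prod_fintype _ _ (by simp)]
  simp only [map_mul, map_prod, map_pow]
  rfl

theorem coeff_wsub (w : Fin n → ℕ) (f : S K n) (d : ℕ) (u : Fin n →₀ ℕ) :
    coeff u ((wsub w f).coeff d) = if wdot w u = d then coeff u f else 0 := by
  classical
  induction f using MvPolynomial.induction_on' with
  | monomial u' c =>
    rw [wsub_monomial, Polynomial.coeff_C_mul, Polynomial.coeff_X_pow]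
    by_cases h : d = wdot w u'
    · simp only [h, if_true, mul_one, coeff_monomial]
      by_cases h' : u' = u
      · simp [h']
      · simp [h']
    · simp only [h, if_false, mul_zero, coeff_monomial]
      by_cases h' : u' = u
      · subst h'; simp [Ne.symm h]
      · simp [h']
  | add p q hp hq =>
    rw [map_add, Polynomial.coeff_add, coeff_add, coeff_add, hp, hq]
    split_ifs <;> simp

theorem ordGE_iff (w : Fin n → ℕ) (m : ℕ) (f : S K n) :
    OrdGE w m f ↔ Polynomial.X ^ m ∣ wsub w f := by
  rw [Polynomial.X_pow_dvd_iff]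
  constructor
  · intro h d hd
    ext u
    rw [coeff_wsub, coeff_zero]
    split_ifs with h1
    · by_contra h2
      have := h u (mem_support_iff.2 h2)
      omega
    · rfl
  · intro h u hu
    by_contra h1
    have h2 := coeff_wsub w f (wdot w u) u
    rw [h _ (not_le.1 h1), if_pos rfl, coeff_zero] at h2
    exact mem_support_iff.1 hu h2.symm

/-- A polynomial with a monomial of weight zero can be cancelled, because `t` is prime. -/
theorem OrdGE.cancel {w : Fin n → ℕ} {m : ℕ} {g h : S K n} (hgh : OrdGE w m (g * h))
    {u : Fin n →₀ ℕ} (hu : coeff u g ≠ 0) (hw : wdot w u = 0) : OrdGE w m h := by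
  rw [ordGE_iff] at hgh ⊢
  rw [map_mul] at hgh
  refine Polynomial.prime_X.pow_dvd_of_dvd_mul_left _ ?_ hgh
  rw [Polynomial.X_dvd_iff]
  intro h0
  have := coeff_wsub w g 0 u
  rw [h0, if_pos hw, coeff_zero] at this
  exact hu this.symm

/-! ### Powers of the complementary edge ideal of a bipartite graph -/

/-- The indicator weight of `T`. -/
def indw (T : Finset (Fin n)) : Fin n → ℕ := fun v => if v ∈ T then 1 else 0

theorem wdot_indw (T : Finset (Fin n)) (u : Fin n →₀ ℕ) : wdot (indw T) u = ∑ v ∈ T, u v := by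
  simp [wdot, indw]

theorem gen_apply (i j v : Fin n) :
    (aexp n - Finsupp.single i 1 - Finsupp.single j 1 : Fin n →₀ ℕ) v =
      1 - (if i = v then 1 else 0) - (if j = v then 1 else 0) := by
  classical
  simp [aexp, expF_apply, Finsupp.single_apply]

theorem ordGE_of_mem_pow {G : SimpleGraph (Fin n)} {T : Finset (Fin n)} (hT : Ind G T) {k : ℕ}
    {f : S K n} (hf : f ∈ compIdeal K n G ^ k) : OrdGE (indw T) ((T.card - 1) * k) f := by
  have hle : compIdeal K n G ≤ Ideal.comap (wsub (indw T))
      (Ideal.span {(Polynomial.X : Polynomial (S K n)) ^ (T.card - 1)}) := by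
    unfold compIdeal
    rw [Ideal.span_le]
    rintro _ ⟨i, j, hij, rfl⟩
    rw [SetLike.mem_coe, Ideal.mem_comap, Ideal.mem_span_singleton, wsub_monomial]
    refine Dvd.dvd.mul_left (pow_dvd_pow _ ?_) _
    rw [wdot_indw]
    have h1 : ∑ v ∈ T, ((if i = v then 1 else 0) + (if j = v then 1 else 0)) ≤ 1 := by
      rw [Finset.sum_add_distrib]
      have h2 : i ∈ T → j ∉ T := fun h h' => hT _ h _ h' hij
      by_cases hi : i ∈ T <;> by_cases hj : j ∈ T <;> simp_all
    have h3 : T.card = ∑ v ∈ T, 1 := by simp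
    have h4 : ∑ v ∈ T, 1 ≤ ∑ v ∈ T, ((aexp n - Finsupp.single i 1 - Finsupp.single j 1 : Fin n →₀ ℕ) v +
        ((if i = v then 1 else 0) + (if j = v then 1 else 0))) := by
      refine Finset.sum_le_sum fun v _ => ?_
      rw [gen_apply]
      omega
    rw [Finset.sum_add_distrib] at h4
    omega
  have h := Ideal.le_comap_pow _ k (Ideal.pow_right_mono hle k hf)
  rw [Ideal.mem_comap, Ideal.span_singleton_pow, Ideal.mem_span_singleton, ← pow_mul] at h
  exact (ordGE_iff _ _ _).2 h

theorem monomial_mem_pow {G : SimpleGraph (Fin n)} {A : Finset (Fin n)}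
    (hA : ∀ i j, G.Adj i j → (i ∈ A ↔ j ∉ A)) (hdeg : ∀ v, ∃ w, G.Adj v w) (v₀ : Fin n)
    {k : ℕ} {u : Fin n →₀ ℕ} (hu : ∀ T, Ind G T → (T.card - 1) * k ≤ ∑ v ∈ T, u v) (c : K) :
    (monomial u c : S K n) ∈ compIdeal K n G ^ k := by
  classical
  obtain ⟨α, β, hadj, hcov⟩ := exists_edge_cover hA hdeg v₀ (fun v => k - u v) k (by
    intro T hT
    let T' := T.filter fun v => u v < k
    have hT' : Ind G T' := fun i hi j hj =>
      hT i (Finset.mem_filter.1 hi).1 j (Finset.mem_filter.1 hj).1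
    have h1 : ∑ v ∈ T, (k - u v) = ∑ v ∈ T', (k - u v) := by
      refine (Finset.sum_subset (Finset.filter_subset _ _) fun v hv hv' => ?_).symm
      simp only [Finset.mem_filter, not_and, not_lt] at hv'
      have := hv' hv
      omega
    have h2 : ∑ v ∈ T', (k - u v) + ∑ v ∈ T', u v = T'.card * k := by
      rw [← Finset.sum_add_distrib, ← smul_eq_mul, ← Finset.sum_const]
      refine Finset.sum_congr rfl fun v hv => ?_
      have := (Finset.mem_filter.1 hv).2
      omega
    have h3 := hu T' hT'
    rw [h1]
    rcases Nat.eq_zero_or_pos T'.card with h0 | h0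
    · rw [h0] at h2
      omega
    · obtain ⟨m, hm⟩ : ∃ m, T'.card = m + 1 := ⟨T'.card - 1, by omega⟩
      rw [hm] at h2 h3
      simp only [Nat.add_sub_cancel] at h3
      rw [add_mul] at h2
      omega)
  let E : Fin k → (Fin n →₀ ℕ) := fun i =>
    aexp n - Finsupp.single (α i) 1 - Finsupp.single (β i) 1
  have hprod : ∏ i, (monomial (E i) (1 : K) : S K n) ∈ compIdeal K n G ^ k := by
    have := Ideal.prod_mem_prod (s := Finset.univ) (I := fun _ : Fin k => compIdeal K n G)
      (x := fun i => (monomial (E i) (1 : K) : S K n))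
      (fun i _ => Ideal.subset_span ⟨α i, β i, hadj i, rfl⟩)
    simpa using this
  rw [← monomial_sum_one] at hprod
  have hle : ∑ i, E i ≤ u := by
    intro v
    rw [Finsupp.finsetSum_apply]
    have h1 : ∑ i, E i v + ldeg α β v = k := by
      unfold ldeg
      rw [← Finset.sum_add_distrib]
      calc _ = ∑ _i : Fin k, 1 := by
            refine Finset.sum_congr rfl fun i _ => ?_
            simp only [E]
            rw [gen_apply]
            have := (hadj i).ne
            by_cases h1 : α i = v <;> by_cases h2 : β i = v <;> simp_all
        _ = k := by simp
    have h2 := hcov v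
    omega
  have : (monomial u c : S K n) = monomial (u - ∑ i, E i) c * monomial (∑ i, E i) 1 := by
    rw [monomial_mul, mul_one, tsub_add_cancel_of_le hle]
  rw [this]
  exact Ideal.mul_mem_left _ _ hprod

/-- `I_c(G)^k` is cut out by the valuations of the independent sets of `G`. -/
theorem mem_pow_iff {G : SimpleGraph (Fin n)} {A : Finset (Fin n)}
    (hA : ∀ i j, G.Adj i j → (i ∈ A ↔ j ∉ A)) (hdeg : ∀ v, ∃ w, G.Adj v w) (v₀ : Fin n)
    {k : ℕ} {f : S K n} :
    f ∈ compIdeal K n G ^ k ↔ ∀ T, Ind G T → OrdGE (indw T) ((T.card - 1) * k) f := by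
  refine ⟨fun hf T hT => ordGE_of_mem_pow hT hf, fun h => ?_⟩
  rw [f.as_sum]
  refine Ideal.sum_mem _ fun u hu => monomial_mem_pow hA hdeg v₀ (fun T hT => ?_) _
  have := h T hT u hu
  rwa [wdot_indw] at this

/-- The difference of two adjacent variables is a nonzerodivisor modulo `I_c(G)^k`, since no
independent set contains both vertices. -/
theorem mem_of_sub_mul_mem {G : SimpleGraph (Fin n)} {A : Finset (Fin n)}
    (hA : ∀ i j, G.Adj i j → (i ∈ A ↔ j ∉ A)) (hdeg : ∀ v, ∃ w, G.Adj v w)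
    {k : ℕ} {p q : Fin n} (hpq : G.Adj p q) {h : S K n}
    (hh : (X p - X q) * h ∈ compIdeal K n G ^ k) : h ∈ compIdeal K n G ^ k := by
  classical
  rw [mem_pow_iff hA hdeg p] at hh ⊢
  intro T hT
  have hne := hpq.ne
  by_cases hp : p ∈ T
  · have hq : q ∉ T := fun hq => hT p hp q hq hpq
    refine (hh T hT).cancel (u := Finsupp.single q 1) ?_ ?_
    · simp [coeff_X, Finsupp.single_left_inj, hne]
    · rw [wdot_indw]
      exact Finset.sum_eq_zero fun v hv => Finsupp.single_eq_of_ne (by rintro rfl; exact hq hv)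
  · refine (hh T hT).cancel (u := Finsupp.single p 1) ?_ ?_
    · simp [coeff_X, Finsupp.single_left_inj, hne.symm]
    · rw [wdot_indw]
      exact Finset.sum_eq_zero fun v hv => Finsupp.single_eq_of_ne (by rintro rfl; exact hp hv)

end

/-! ### Regular sequences of length one and two -/

section
variable {K : Type} [Field K] {n : ℕ}

theorem smul_mk {J : Ideal (S K n)} (f h : S K n) :
    f • Ideal.Quotient.mk J h = Ideal.Quotient.mk J (f * h) := rfl

theorem isSMulRegular_quot_iff {J : Ideal (S K n)} {f : S K n} :
    IsSMulRegular (S K n ⧸ J) f ↔ ∀ h, f * h ∈ J → h ∈ J := by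
  rw [isSMulRegular_iff_right_eq_zero_of_smul]
  constructor
  · intro H h hh
    rw [← Ideal.Quotient.eq_zero_iff_mem]
    refine H _ ?_
    rw [smul_mk]
    exact Ideal.Quotient.eq_zero_iff_mem.2 hh
  · intro H x hx
    obtain ⟨h, rfl⟩ := Ideal.Quotient.mk_surjective x
    rw [smul_mk,
      Ideal.Quotient.eq_zero_iff_mem] at hx
    exact Ideal.Quotient.eq_zero_iff_mem.2 (H h hx)

open scoped Pointwise in
theorem mk_mem_smul_top_iff {J : Ideal (S K n)} {f h : S K n} :
    (Ideal.Quotient.mk J h) ∈ (f • (⊤ : Submodule (S K n) (S K n ⧸ J))) ↔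
      ∃ y, h - f * y ∈ J := by
  rw [Submodule.mem_smul_pointwise_iff_exists]
  constructor
  · rintro ⟨x, -, hx⟩
    obtain ⟨y, rfl⟩ := Ideal.Quotient.mk_surjective x
    refine ⟨y, ?_⟩
    rw [← Ideal.Quotient.eq_zero_iff_mem, map_sub, ← hx, smul_mk, sub_self]
  · rintro ⟨y, hy⟩
    refine ⟨Ideal.Quotient.mk J y, trivial, ?_⟩
    rw [smul_mk]
    exact (Ideal.Quotient.eq.2 hy).symm

theorem isSMulRegular_quotSMulTop_iff {J : Ideal (S K n)} {f g : S K n} :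
    IsSMulRegular (QuotSMulTop f (S K n ⧸ J)) g ↔
      ∀ h, (∃ y, g * h - f * y ∈ J) → ∃ y, h - f * y ∈ J := by
  rw [isSMulRegular_iff_right_eq_zero_of_smul]
  constructor
  · intro H h hh
    rw [← mk_mem_smul_top_iff] at hh ⊢
    have := H (Submodule.Quotient.mk (Ideal.Quotient.mk J h)) (by
      rw [← Submodule.Quotient.mk_smul, Submodule.Quotient.mk_eq_zero, smul_mk]
      exact hh)
    rwa [Submodule.Quotient.mk_eq_zero] at this
  · intro H x hx
    obtain ⟨x, rfl⟩ := Submodule.Quotient.mk_surjective _ x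
    obtain ⟨h, rfl⟩ := Ideal.Quotient.mk_surjective x
    rw [← Submodule.Quotient.mk_smul, Submodule.Quotient.mk_eq_zero, smul_mk, mk_mem_smul_top_iff] at hx
    rw [Submodule.Quotient.mk_eq_zero, mk_mem_smul_top_iff]
    exact H h hx

theorem constantCoeff_of_mem_maxIdl {f : S K n} (hf : f ∈ maxIdl K n) : constantCoeff f = 0 := by
  have hle : maxIdl K n ≤ RingHom.ker (constantCoeff (R := K) (σ := Fin n)) := by
    unfold maxIdl
    rw [Ideal.span_le]
    rintro _ ⟨i, rfl⟩
    simp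
  exact hle hf

theorem one_notMem_maxIdl : (1 : S K n) ∉ maxIdl K n := fun h => by
  simpa using constantCoeff_of_mem_maxIdl h

theorem X_mem_maxIdl (i : Fin n) : (X i : S K n) ∈ maxIdl K n := Ideal.subset_span ⟨i, rfl⟩

theorem top_ne_smul {J : Ideal (S K n)} (hJ : J ≤ maxIdl K n) {rs : List (S K n)}
    (hm : ∀ r ∈ rs, r ∈ maxIdl K n) :
    (⊤ : Submodule (S K n) (S K n ⧸ J)) ≠ Ideal.ofList rs • ⊤ := by
  intro h
  have hrs : Ideal.ofList rs ≤ maxIdl K n := by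
    unfold Ideal.ofList
    rw [Ideal.span_le]
    exact fun r hr => hm r hr
  have key : ∀ x ∈ (Ideal.ofList rs • ⊤ : Submodule (S K n) (S K n ⧸ J)),
      ∃ y ∈ maxIdl K n, Ideal.Quotient.mk J y = x := by
    intro x hx
    refine Submodule.smul_induction_on hx ?_ ?_
    · intro r hr z _
      obtain ⟨z, rfl⟩ := Ideal.Quotient.mk_surjective z
      refine ⟨r * z, Ideal.mul_mem_right _ _ (hrs hr), ?_⟩
      rw [smul_mk]
    · rintro _ _ ⟨y, hy, rfl⟩ ⟨z, hz, rfl⟩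
      exact ⟨y + z, Ideal.add_mem _ hy hz, map_add _ _ _⟩
  obtain ⟨y, hy, hy1⟩ := key (Ideal.Quotient.mk J 1) (h ▸ trivial)
  have := Ideal.add_mem _ (hJ (Ideal.Quotient.eq.1 hy1.symm)) hy
  rw [sub_add_cancel] at this
  exact one_notMem_maxIdl this

theorem isRegular_one {J : Ideal (S K n)} (hJ : J ≤ maxIdl K n) {f : S K n}
    (hf : f ∈ maxIdl K n) (h : ∀ h, f * h ∈ J → h ∈ J) :
    RingTheory.Sequence.IsRegular (S K n ⧸ J) [f] where
  toIsWeaklyRegular := by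
    rw [RingTheory.Sequence.isWeaklyRegular_singleton_iff]
    exact isSMulRegular_quot_iff.2 h
  top_ne_smul := top_ne_smul hJ (by simpa using hf)

theorem isRegular_two {J : Ideal (S K n)} (hJ : J ≤ maxIdl K n) {f g : S K n}
    (hf : f ∈ maxIdl K n) (hg : g ∈ maxIdl K n) (h1 : ∀ h, f * h ∈ J → h ∈ J)
    (h2 : ∀ h, (∃ y, g * h - f * y ∈ J) → ∃ y, h - f * y ∈ J) :
    RingTheory.Sequence.IsRegular (S K n ⧸ J) [f, g] where
  toIsWeaklyRegular := by
    rw [RingTheory.Sequence.isWeaklyRegular_cons_iff,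
      RingTheory.Sequence.isWeaklyRegular_singleton_iff]
    exact ⟨isSMulRegular_quot_iff.2 h1, isSMulRegular_quotSMulTop_iff.2 h2⟩
  top_ne_smul := top_ne_smul hJ (by
    intro r hr
    simp only [List.mem_cons, List.not_mem_nil, or_false] at hr
    rcases hr with rfl | rfl <;> assumption)

/-- If `S/J` has depth at least two, every homomorphism `𝔪 → S/J` is multiplication by an
element. The homomorphism is given here by representatives `φ f` satisfying `f φ(g) = g φ(f)`. -/
theorem exists_mul_of_isRegular {J : Ideal (S K n)} {rs : List (S K n)} (hlen : 2 ≤ rs.length)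
    (hm : ∀ r ∈ rs, r ∈ maxIdl K n) (hreg : RingTheory.Sequence.IsRegular (S K n ⧸ J) rs)
    (φ : S K n → S K n)
    (hφ : ∀ f ∈ maxIdl K n, ∀ g ∈ maxIdl K n, f * φ g - g * φ f ∈ J) :
    ∃ w, ∀ f ∈ maxIdl K n, φ f - f * w ∈ J := by
  match rs, hlen with
  | f :: g :: rest, _ =>
    have hw := hreg.toIsWeaklyRegular
    rw [RingTheory.Sequence.isWeaklyRegular_cons_iff,
      RingTheory.Sequence.isWeaklyRegular_cons_iff] at hw
    have h1 := isSMulRegular_quot_iff.1 hw.1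
    have h2 := isSMulRegular_quotSMulTop_iff.1 hw.2.1
    have hf : f ∈ maxIdl K n := hm f (by simp)
    have hg : g ∈ maxIdl K n := hm g (by simp)
    obtain ⟨w, hw⟩ := h2 (φ f) ⟨φ g, hφ g hg f hf⟩
    refine ⟨w, fun x hx => h1 _ ?_⟩
    have e : f * (φ x - x * w) = (f * φ x - x * φ f) + x * (φ f - f * w) := by ring
    rw [e]
    exact Ideal.add_mem _ (hφ f hf x hx) (Ideal.mul_mem_left _ _ hw)

theorem compIdeal_pow_le_maxIdl (hn : 3 ≤ n) (G : SimpleGraph (Fin n)) {k : ℕ} (hk : 0 < k) :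
    compIdeal K n G ^ k ≤ maxIdl K n := by
  classical
  refine (Ideal.pow_le_self hk.ne').trans ?_
  unfold compIdeal
  rw [Ideal.span_le]
  rintro _ ⟨i, j, hij, rfl⟩
  obtain ⟨l, hl⟩ : ∃ l, l ∉ ({i, j} : Finset (Fin n)) := by
    by_contra hcon
    push Not at hcon
    have h1 : (Finset.univ : Finset (Fin n)) ⊆ {i, j} := fun l _ => hcon l
    have h2 := (Finset.card_le_card h1).trans Finset.card_le_two
    simp at h2
    omega
  simp only [Finset.mem_insert, Finset.mem_singleton, not_or] at hl
  have hle : Finsupp.single l 1 ≤ (aexp n - Finsupp.single i 1 - Finsupp.single j 1) := by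
    rw [Finsupp.single_le_iff, gen_apply]
    simp [Ne.symm hl.1, Ne.symm hl.2]
  have : (monomial (aexp n - Finsupp.single i 1 - Finsupp.single j 1) 1 : S K n) =
      monomial (aexp n - Finsupp.single i 1 - Finsupp.single j 1 - Finsupp.single l 1) 1 * X l := by
    rw [X, monomial_mul, mul_one, tsub_add_cancel_of_le hle]
  rw [this]
  exact Ideal.mul_mem_left _ _ (X_mem_maxIdl l)

/-- The substitution sending the variables outside `A` to zero. -/
noncomputable def killB (A : Finset (Fin n)) : S K n →ₐ[K] S K n :=
  aeval fun v => if v ∈ A then X v else 0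

theorem sub_killB_mem (A : Finset (Fin n)) (f : S K n) :
    f - killB A f ∈ Ideal.span ((X : Fin n → S K n) '' {v | v ∉ A}) := by
  classical
  rw [← Ideal.Quotient.eq]
  have : (Ideal.Quotient.mkₐ K (Ideal.span ((X : Fin n → S K n) '' {v | v ∉ A}))) =
      (Ideal.Quotient.mkₐ K (Ideal.span ((X : Fin n → S K n) '' {v | v ∉ A}))).comp (killB A) := by
    ext v
    simp only [killB, AlgHom.comp_apply, aeval_X]
    split_ifs with h
    · rfl
    · rw [map_zero]
      exact Ideal.Quotient.eq_zero_iff_mem.2 (Ideal.subset_span ⟨v, h, rfl⟩)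
  exact DFunLike.congr_fun this f

theorem killB_mem (A : Finset (Fin n)) {f : S K n} (hf : f ∈ maxIdl K n) :
    killB A f ∈ Ideal.span ((X : Fin n → S K n) '' {v | v ∈ A}) := by
  classical
  have hle : maxIdl K n ≤
      Ideal.comap (killB A) (Ideal.span ((X : Fin n → S K n) '' {v | v ∈ A})) := by
    unfold maxIdl
    rw [Ideal.span_le]
    rintro _ ⟨v, rfl⟩
    rw [SetLike.mem_coe, Ideal.mem_comap]
    simp only [killB, aeval_X]
    split_ifs with h
    · exact Ideal.subset_span ⟨v, h, rfl⟩
    · exact Ideal.zero_mem _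
  exact hle hf

end

/-! ### Depth at most one -/

section
variable {K : Type} [Field K] {n : ℕ}

theorem killB_comm {J : Ideal (S K n)} {A : Finset (Fin n)} (b y : S K n) (D : S K n → S K n)
    (hD : ∀ f ∈ maxIdl K n, y * D f = killB A f)
    (hb : ∀ f ∈ maxIdl K n, ∀ j ∉ A, b * D f * X j ∈ J) :
    ∀ f ∈ maxIdl K n, ∀ g ∈ maxIdl K n, f * (b * D g) - g * (b * D f) ∈ J := by
  have key : ∀ f, ∀ g ∈ maxIdl K n, b * D g * (f - killB A f) ∈ J := by
    intro f g hg
    have hle : Ideal.span ((X : Fin n → S K n) '' {v | v ∉ A}) ≤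
        Submodule.comap (LinearMap.mulLeft (S K n) (b * D g)) J := by
      rw [Ideal.span_le]
      rintro _ ⟨v, hv, rfl⟩
      exact hb g hg v hv
    exact hle (sub_killB_mem A f)
  intro f hf g hg
  have e : f * (b * D g) - g * (b * D f) =
      b * D g * (f - killB A f) - b * D f * (g - killB A g) := by
    rw [← hD f hf, ← hD g hg]
    ring
  rw [e]
  exact Ideal.sub_mem _ (key f g hg) (key g f hf)

theorem coeff_eq_zero_of_mem {G : SimpleGraph (Fin n)} {T : Finset (Fin n)} (hT : Ind G T) {k : ℕ}
    {f : S K n} (hf : f ∈ compIdeal K n G ^ k) {u : Fin n →₀ ℕ}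
    (hu : ∑ v ∈ T, u v < (T.card - 1) * k) : coeff u f = 0 := by
  by_contra h
  have := ordGE_of_mem_pow hT hf u (mem_support_iff.2 h)
  rw [wdot_indw] at this
  omega

theorem ind_side {G : SimpleGraph (Fin n)} {A : Finset (Fin n)}
    (hA : ∀ i j, G.Adj i j → (i ∈ A ↔ j ∉ A)) : Ind G A :=
  fun i hi j hj h => ((hA i j h).1 hi) hj

theorem bip_compl {G : SimpleGraph (Fin n)} {A : Finset (Fin n)}
    (hA : ∀ i j, G.Adj i j → (i ∈ A ↔ j ∉ A)) : ∀ i j, G.Adj i j → (i ∈ Aᶜ ↔ j ∉ Aᶜ) := by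
  intro i j h
  have := hA i j h
  rw [Finset.mem_compl, Finset.mem_compl]
  tauto

theorem Good.compl {G : SimpleGraph (Fin n)} {A : Finset (Fin n)} {k : ℕ} (h : Good G A k) :
    Good G Aᶜ k := by
  obtain ⟨α, β, h1, h2⟩ := h
  refine ⟨α, β, h1, fun T hT hm => ?_⟩
  rw [compl_compl]
  exact (h2 T hT hm).symm

theorem sum_sub_ldeg {k : ℕ} {α β : Fin (k + 1) → Fin n} (T : Finset (Fin n))
    (h : ∀ v ∈ T, ldeg α β v ≤ k) :
    ∑ v ∈ T, (k - ldeg α β v) + ∑ v ∈ T, ldeg α β v = T.card * k := by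
  rw [← Finset.sum_add_distrib, ← smul_eq_mul, ← Finset.sum_const]
  refine Finset.sum_congr rfl fun v hv => ?_
  have := h v hv
  omega

theorem card_sub_one_mul {m : ℕ} (hm : 0 < m) (k : ℕ) : (m - 1) * k + k = m * k := by
  obtain ⟨l, rfl⟩ : ∃ l, m = l + 1 := ⟨m - 1, by omega⟩
  simp [add_mul]

/-- Depth at most one when the witnessing family has at most `k` edges at every vertex. With `x^a = x^{k - deg}`, the homomorphism
`𝔪 → S/I^k` is multiplication by `x^a` on the variables of `A` and zero on the others. -/
theorem length_le_one_of_ldeg_le {G : SimpleGraph (Fin n)} {A : Finset (Fin n)}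
    (hA : ∀ i j, G.Adj i j → (i ∈ A ↔ j ∉ A)) (hdeg : ∀ v, ∃ w, G.Adj v w)
    {i₀ j₀ : Fin n} (hi₀ : i₀ ∈ A) (hj₀ : j₀ ∉ A) {k : ℕ}
    {α β : Fin (k + 1) → Fin n} (hadj : ∀ i, G.Adj (α i) (β i))
    (hmeet : ∀ T, Ind G T → (∀ i, α i ∈ T ∨ β i ∈ T) → T = A ∨ T = Aᶜ)
    (hle : ∀ v, ldeg α β v ≤ k)
    {rs : List (S K n)} (hm : ∀ r ∈ rs, r ∈ maxIdl K n)
    (hreg : RingTheory.Sequence.IsRegular (S K n ⧸ compIdeal K n G ^ k) rs) : rs.length ≤ 1 := by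
  classical
  by_contra hlen
  have hIA := ind_side hA
  have hIB := ind_side (bip_compl hA)
  have hsA : ∑ v ∈ A, ldeg α β v = k + 1 := sum_ldeg_eq hadj hIA fun i => by
    have := hA _ _ (hadj i)
    tauto
  have hsB : ∑ v ∈ Aᶜ, ldeg α β v = k + 1 := sum_ldeg_eq hadj hIB fun i => by
    have := hA _ _ (hadj i)
    rw [Finset.mem_compl, Finset.mem_compl]
    tauto
  have hcA : 0 < A.card := Finset.card_pos.2 ⟨i₀, hi₀⟩
  have hcB : 0 < Aᶜ.card := Finset.card_pos.2 ⟨j₀, Finset.mem_compl.2 hj₀⟩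
  let a : Fin n →₀ ℕ := Finsupp.equivFunOnFinite.symm fun v => k - ldeg α β v
  have ha : ∀ v, a v = k - ldeg α β v := fun v => rfl
  have hasum : ∀ T : Finset (Fin n), ∑ v ∈ T, a v + ∑ v ∈ T, ldeg α β v = T.card * k :=
    fun T => sum_sub_ldeg T fun v _ => hle v
  have hsingle : ∀ (T : Finset (Fin n)) (i : Fin n),
      ∑ v ∈ T, (Finsupp.single i 1 : Fin n →₀ ℕ) v = if i ∈ T then 1 else 0 := by
    intro T i
    simp [Finsupp.single_apply]
  have hmem : ∀ i ∈ A, ∀ j ∉ A,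
      (monomial (a + Finsupp.single i 1 + Finsupp.single j 1) 1 : S K n) ∈
        compIdeal K n G ^ k := by
    intro i hi j hj
    refine monomial_mem_pow hA hdeg i₀ (fun T hT => ?_) 1
    simp only [Finsupp.add_apply, Finset.sum_add_distrib, hsingle]
    have h1 := hasum T
    rcases Nat.eq_zero_or_pos T.card with h0 | h0
    · simp [h0]
    have h2 := card_sub_one_mul h0 k
    by_cases hT' : T = A ∨ T = Aᶜ
    · rcases hT' with rfl | rfl
      · simp only [hi, if_true]
        omega
      · simp only [Finset.mem_compl, hj, not_false_eq_true, if_true]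
        omega
    · have h3 : ∑ v ∈ T, ldeg α β v ≤ k := by
        by_contra h4
        exact hT' (hmeet T hT (meet_of_sum_ldeg hadj hT (by omega)))
      omega
  obtain ⟨w, hw⟩ := exists_mul_of_isRegular (by omega) hm hreg
    (fun f => monomial a 1 * killB A f)
    (killB_comm (A := A) (monomial a 1) 1 (killB A) (fun f _ => one_mul _) (by
      intro f hf j hj
      have hle : Ideal.span ((X : Fin n → S K n) '' {v | v ∈ A}) ≤
          Submodule.comap (LinearMap.mulLeft (S K n) (monomial a 1 * X j))
            (compIdeal K n G ^ k) := by
        rw [Ideal.span_le]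
        rintro _ ⟨i, hi, rfl⟩
        have e : (monomial a 1 * X j * X i : S K n) =
            monomial (a + Finsupp.single i 1 + Finsupp.single j 1) 1 := by
          rw [X, X, monomial_mul, monomial_mul, mul_one, mul_one, add_right_comm]
        change (monomial a 1 * X j * X i : S K n) ∈ compIdeal K n G ^ k
        rw [e]
        exact hmem i hi j hj
      have := hle (killB_mem A hf)
      rw [mul_right_comm]
      exact this))
  -- The coefficient of `x^a` in the multiplier `w` would have to be both `1` and `0`.
  have h1 : coeff a w = 1 := by
    have h := coeff_eq_zero_of_mem hIB (hw (X i₀) (X_mem_maxIdl i₀))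
      (u := a + Finsupp.single i₀ 1) (by
        simp only [Finsupp.add_apply, Finset.sum_add_distrib, hsingle, Finset.mem_compl, hi₀,
          not_true_eq_false, if_false]
        have := hasum Aᶜ
        have := card_sub_one_mul hcB k
        omega)
    simp only [killB, aeval_X, hi₀, if_true] at h
    rw [mul_comm (X i₀) w, coeff_sub, coeff_mul_X, coeff_mul_X, coeff_monomial, if_pos rfl] at h
    exact (sub_eq_zero.1 h).symm
  have h0 : coeff a w = 0 := by
    have h := coeff_eq_zero_of_mem hIA (hw (X j₀) (X_mem_maxIdl j₀))
      (u := a + Finsupp.single j₀ 1) (by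
        simp only [Finsupp.add_apply, Finset.sum_add_distrib, hsingle, hj₀, if_false]
        have := hasum A
        have := card_sub_one_mul hcA k
        omega)
    simp only [killB, aeval_X, hj₀, if_false, mul_zero, zero_sub] at h
    rw [mul_comm (X j₀) w, coeff_neg, coeff_mul_X] at h
    exact neg_eq_zero.1 h
  rw [h1] at h0
  exact one_ne_zero h0

/-- Depth at most one when one side of the bipartition is a single vertex `p`, so `x_p` does not occur in `I` and `p` has
degree `k + 1`. The homomorphism `𝔪 → S/I^k` sends `x_p` to `x^b`, where `b = k - deg` away
from `p`, and the other variables to zero. -/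
theorem length_le_one_of_singleton {G : SimpleGraph (Fin n)} {p : Fin n}
    (hA : ∀ i j, G.Adj i j → (i ∈ ({p} : Finset (Fin n)) ↔ j ∉ ({p} : Finset (Fin n))))
    (hdeg : ∀ v, ∃ w, G.Adj v w) (hn : 3 ≤ n) {k : ℕ}
    {α β : Fin (k + 1) → Fin n} (hadj : ∀ i, G.Adj (α i) (β i))
    (hmeet : ∀ T, Ind G T → (∀ i, α i ∈ T ∨ β i ∈ T) → T = {p} ∨ T = {p}ᶜ)
    {rs : List (S K n)} (hm : ∀ r ∈ rs, r ∈ maxIdl K n)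
    (hreg : RingTheory.Sequence.IsRegular (S K n ⧸ compIdeal K n G ^ k) rs) : rs.length ≤ 1 := by
  classical
  by_contra hlen
  have hIB := ind_side (bip_compl hA)
  have hsB : ∑ v ∈ {p}ᶜ, ldeg α β v = k + 1 := sum_ldeg_eq hadj hIB fun i => by
    have := hA _ _ (hadj i)
    rw [Finset.mem_compl, Finset.mem_compl]
    tauto
  have hcB : ({p}ᶜ : Finset (Fin n)).card = n - 1 := by simp [Finset.card_compl]
  have hle : ∀ v ≠ p, ldeg α β v ≤ k := by
    intro v hv
    by_contra h
    have hI : Ind G {v} := by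
      intro i hi j hj hij
      rw [Finset.mem_singleton] at hi hj
      subst hi hj
      exact hij.ne rfl
    rcases hmeet {v} hI (meet_of_sum_ldeg hadj hI (by simp; omega)) with h1 | h1
    · exact hv (Finset.singleton_inj.1 h1)
    · have := congrArg Finset.card h1
      rw [hcB, Finset.card_singleton] at this
      omega
  let b : Fin n →₀ ℕ := Finsupp.equivFunOnFinite.symm fun v => if v = p then 0 else k - ldeg α β v
  have hb : ∀ v ≠ p, b v = k - ldeg α β v := fun v hv => if_neg hv
  have hbp : b p = 0 := if_pos rfl
  have hbsum : ∀ T : Finset (Fin n), p ∉ T →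
      ∑ v ∈ T, b v + ∑ v ∈ T, ldeg α β v = T.card * k := by
    intro T hT
    have hne : ∀ v ∈ T, v ≠ p := fun v hv h => hT (h ▸ hv)
    rw [← sum_sub_ldeg T fun v hv => hle v (hne v hv)]
    congr 1
    exact Finset.sum_congr rfl fun v hv => hb v (hne v hv)
  have hsingle : ∀ (T : Finset (Fin n)) (i : Fin n),
      ∑ v ∈ T, (Finsupp.single i 1 : Fin n →₀ ℕ) v = if i ∈ T then 1 else 0 := by
    intro T i
    simp [Finsupp.single_apply]
  -- Every vertex other than `p` has `p` as its only neighbour.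
  have hpadj : ∀ v, v ≠ p → G.Adj p v := by
    intro v hv
    obtain ⟨w, hw⟩ := hdeg v
    have := hA v w hw
    simp only [Finset.mem_singleton, hv, false_iff, not_not] at this
    exact this ▸ hw.symm
  have hmem : ∀ j, j ≠ p →
      (monomial (b + Finsupp.single j 1) 1 : S K n) ∈ compIdeal K n G ^ k := by
    intro j hj
    refine monomial_mem_pow hA hdeg p (fun T hT => ?_) 1
    by_cases hpT : p ∈ T
    · have : T = {p} := by
        refine Finset.eq_singleton_iff_unique_mem.2 ⟨hpT, fun v hv => ?_⟩
        by_contra hvp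
        exact hT p hpT v hv (hpadj v hvp)
      simp [this]
    simp only [Finsupp.add_apply, Finset.sum_add_distrib, hsingle]
    have h1 := hbsum T hpT
    rcases Nat.eq_zero_or_pos T.card with h0 | h0
    · simp [h0]
    have h2 := card_sub_one_mul h0 k
    by_cases hT' : T = {p}ᶜ
    · have hjT : j ∈ T := by simp [hT', hj]
      rw [← hT'] at hsB
      rw [if_pos hjT]
      omega
    · have h3 : ∑ v ∈ T, ldeg α β v ≤ k := by
        by_contra h4
        rcases hmeet T hT (meet_of_sum_ldeg hadj hT (by omega)) with h5 | h5
        · exact hpT (by simp [h5])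
        · exact hT' h5
      omega
  obtain ⟨w, hw⟩ := exists_mul_of_isRegular (by omega) hm hreg
    (fun f => monomial b 1 * (killB {p} f).divMonomial (Finsupp.single p 1))
    (killB_comm (A := {p}) (monomial b 1) (X p)
      (fun f => (killB {p} f).divMonomial (Finsupp.single p 1)) (by
        intro f hf
        have h := killB_mem {p} hf
        have hset : {v | v ∈ ({p} : Finset (Fin n))} = {p} := by ext; simp
        rw [hset, Set.image_singleton, Ideal.mem_span_singleton] at h
        obtain ⟨z, hz⟩ := h
        simp only [hz, X_mul_divMonomial]) (by
        intro f hf j hj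
        rw [Finset.mem_singleton] at hj
        rw [mul_right_comm]
        refine Ideal.mul_mem_right _ _ ?_
        rw [X, monomial_mul, mul_one]
        exact hmem j hj))
  -- At `f = x_p` this says `x^b - x_p w ∈ I^k`, but `x_p ∤ x^b` and `x^b ∉ I^k`.
  have h := coeff_eq_zero_of_mem hIB (hw (X p) (X_mem_maxIdl p)) (u := b) (by
    have h1 := hbsum {p}ᶜ (by simp)
    have h2 := card_sub_one_mul (m := ({p}ᶜ : Finset (Fin n)).card) (by omega) k
    omega)
  have e : (killB {p} (X p) : S K n).divMonomial (Finsupp.single p 1) = 1 := by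
    simp only [killB, aeval_X, Finset.mem_singleton, if_true]
    exact X_divMonomial p
  rw [e, mul_one, coeff_sub, coeff_monomial, if_pos rfl, coeff_X_mul', if_neg (by simp [hbp]),
    sub_zero] at h
  exact one_ne_zero h

theorem length_le_one_of_good {G : SimpleGraph (Fin n)} {A : Finset (Fin n)}
    (hA : ∀ i j, G.Adj i j → (i ∈ A ↔ j ∉ A)) (hdeg : ∀ v, ∃ w, G.Adj v w) (hn : 3 ≤ n) {k : ℕ}
    (hgood : Good G A k) {rs : List (S K n)} (hm : ∀ r ∈ rs, r ∈ maxIdl K n)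
    (hreg : RingTheory.Sequence.IsRegular (S K n ⧸ compIdeal K n G ^ k) rs) : rs.length ≤ 1 := by
  classical
  by_cases h1 : ∃ p, A = {p}
  · obtain ⟨p, rfl⟩ := h1
    obtain ⟨α, β, hadj, hmeet⟩ := hgood
    exact length_le_one_of_singleton hA hdeg hn hadj hmeet hm hreg
  by_cases h2 : ∃ p, Aᶜ = {p}
  · obtain ⟨p, hp⟩ := h2
    obtain ⟨α, β, hadj, hmeet⟩ := hgood.compl
    have hA' := bip_compl hA
    rw [hp] at hA' hmeet
    exact length_le_one_of_singleton hA' hdeg hn hadj hmeet hm hreg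
  obtain ⟨α, β, hadj, hmeet⟩ := hgood
  obtain ⟨i₀, j₀, hi₀, hj₀⟩ : ∃ i j, i ∈ A ∧ j ∉ A := by
    have h := hA _ _ (hadj 0)
    by_cases h' : α 0 ∈ A
    · exact ⟨_, _, h', h.1 h'⟩
    · exact ⟨β 0, α 0, by tauto, h'⟩
  refine length_le_one_of_ldeg_le hA hdeg hi₀ hj₀ hadj hmeet (fun v => ?_) hm hreg
  by_contra h
  have hI : Ind G {v} := by
    intro i hi j hj hij
    rw [Finset.mem_singleton] at hi hj
    subst hi hj
    exact hij.ne rfl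
  rcases hmeet {v} hI (meet_of_sum_ldeg hadj hI (by simp; omega)) with h3 | h3
  · exact h1 ⟨v, h3.symm⟩
  · exact h2 ⟨v, h3.symm⟩

end

/-! ### Trees: a regular sequence of length two modulo the power `n - 3` -/

/-- Suppose that a demand `c` on the vertices of a tree has total `N` on both sides of the
bipartition and less than `N` on every other independent set. A family of `N` edges meeting this
demand has degrees exactly `c`, so only the two sides of the bipartition meet all of its edges, and
it must contain all `n - 1` edges of the tree. -/
theorem le_of_demand {n N : ℕ} {G : SimpleGraph (Fin n)} {A : Finset (Fin n)}
    (hA : ∀ i j, G.Adj i j → (i ∈ A ↔ j ∉ A)) (hG : G.IsTree) (hdeg : ∀ v, ∃ w, G.Adj v w)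
    (v₀ : Fin n) {c : Fin n → ℤ} (h1 : ∑ v ∈ A, c v = N) (h2 : ∑ v ∈ Aᶜ, c v = N)
    (h : ∀ T, Ind G T → T ≠ A → T ≠ Aᶜ → ∑ v ∈ T, c v < N) : n ≤ N + 1 := by
  classical
  have hIA := ind_side hA
  have hIB := ind_side (bip_compl hA)
  have hle : ∀ T, Ind G T → ∑ v ∈ T, c v ≤ N := by
    intro T hT
    by_cases e1 : T = A
    · rw [e1, h1]
    by_cases e2 : T = Aᶜ
    · rw [e2, h2]
    exact (h T hT e1 e2).le
  obtain ⟨α, β, hadj, hcov⟩ := exists_edge_cover hA hdeg v₀ (fun v => (c v).toNat) N (by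
    intro T hT
    let T' := T.filter fun v => 0 < c v
    have hT' : Ind G T' := fun i hi j hj =>
      hT i (Finset.mem_filter.1 hi).1 j (Finset.mem_filter.1 hj).1
    have e1 : ∑ v ∈ T, (c v).toNat = ∑ v ∈ T', (c v).toNat := by
      refine (Finset.sum_subset (Finset.filter_subset _ _) fun v hv hv' => ?_).symm
      simp only [Finset.mem_filter, not_and, not_lt] at hv'
      have := hv' hv
      omega
    have e2 : ((∑ v ∈ T', (c v).toNat : ℕ) : ℤ) = ∑ v ∈ T', c v := by
      push_cast
      refine Finset.sum_congr rfl fun v hv => ?_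
      have := (Finset.mem_filter.1 hv).2
      omega
    have := hle T' hT'
    omega)
  have hcov' : ∀ v, c v ≤ (ldeg α β v : ℤ) := fun v => by
    have := hcov v
    omega
  have hside : ∀ B, Ind G B → ∑ v ∈ B, c v = N → ∀ v ∈ B, c v = (ldeg α β v : ℤ) := by
    intro B hB hs
    have e : ((∑ v ∈ B, ldeg α β v : ℕ) : ℤ) ≤ N := by exact_mod_cast sum_ldeg_le hadj hB
    push_cast at e
    exact (Finset.sum_eq_sum_iff_of_le fun v _ => hcov' v).1
      (le_antisymm (Finset.sum_le_sum fun v _ => hcov' v) (by rw [hs]; exact e))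
  have heq : ∀ v, c v = (ldeg α β v : ℤ) := fun v => by
    by_cases hv : v ∈ A
    · exact hside A hIA h1 v hv
    · exact hside Aᶜ hIB h2 v (Finset.mem_compl.2 hv)
  refine le_of_isTree hA hG hadj fun T hT hmeet => ?_
  by_contra hcon
  push Not at hcon
  have e1 := h T hT hcon.1 hcon.2
  have e2 : ((∑ v ∈ T, ldeg α β v : ℕ) : ℤ) = N := by exact_mod_cast sum_ldeg_eq hadj hT hmeet
  push_cast at e2
  rw [Finset.sum_congr rfl fun v _ => heq v, e2] at e1
  exact lt_irrefl _ e1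

/-- Let `u` be an exponent vector with `u q = 0`. If `u` satisfies the inequalities of the
valuations that take the same value on `x_p` and `x_q` (an independent set avoiding both, or a sum
over two independent sets containing one of them each, other than the pair of sides), then the
exponent `u p` can be split into `x` at `p` and `u p - x` at `q` so that the inequalities of all
independent sets containing `p` or `q` hold. A failure would come from the pair of sides alone, and
would produce a demand excluded by `le_of_demand`. -/
theorem exists_shift {n k : ℕ} {G : SimpleGraph (Fin n)} {A : Finset (Fin n)}
    (hA : ∀ i j, G.Adj i j → (i ∈ A ↔ j ∉ A)) (hG : G.IsTree) (hdeg : ∀ v, ∃ w, G.Adj v w)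
    (hk : k + 3 ≤ n) {p q : Fin n} (hpq : G.Adj p q) (hp : p ∈ A) {u : Fin n → ℕ}
    (hu : u q = 0)
    (H0 : ∀ T, Ind G T → p ∉ T → q ∉ T → (T.card - 1) * k ≤ ∑ v ∈ T, u v)
    (H2 : ∀ T₁ T₂, Ind G T₁ → Ind G T₂ → p ∈ T₁ → q ∈ T₂ → ¬ (T₁ = A ∧ T₂ = Aᶜ) →
      (T₁.card - 1) * k + (T₂.card - 1) * k ≤ ∑ v ∈ T₁, u v + ∑ v ∈ T₂, u v) :
    ∃ x ≤ u p, ∀ T, Ind G T →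
      (p ∈ T → (T.card - 1) * k + u p ≤ ∑ v ∈ T, u v + x) ∧
      (q ∈ T → (T.card - 1) * k ≤ ∑ v ∈ T, u v + (u p - x)) := by
  classical
  have hq : q ∉ A := (hA p q hpq).1 hp
  have hIA := ind_side hA
  have hIB := ind_side (bip_compl hA)
  -- the defect of the inequality belonging to `T`
  let F : Finset (Fin n) → ℤ := fun T => ((T.card : ℤ) - 1) * k - ∑ v ∈ T, (u v : ℤ)
  have hF : ∀ T : Finset (Fin n), T.Nonempty →
      F T = (((T.card - 1) * k : ℕ) : ℤ) - ((∑ v ∈ T, u v : ℕ) : ℤ) := by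
    intro T hT
    have := hT.card_pos
    simp only [F]
    push_cast [Nat.cast_sub (show 1 ≤ T.card by omega)]
    rfl
  have hIp : Ind G {p} := by
    intro i hi j hj h
    rw [Finset.mem_singleton] at hi hj
    exact h.ne (hi.trans hj.symm)
  have hIq : Ind G {q} := by
    intro i hi j hj h
    rw [Finset.mem_singleton] at hi hj
    exact h.ne (hi.trans hj.symm)
  have hFp : F {p} = - (u p : ℤ) := by simp [F]
  have hFq : F {q} = 0 := by simp [F, hu]
  have H0' : ∀ T, Ind G T → p ∉ T → q ∉ T → F T ≤ 0 := by
    intro T hT h1 h2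
    rcases T.eq_empty_or_nonempty with rfl | hne
    · simp [F]
    · rw [hF T hne]
      have := H0 T hT h1 h2
      omega
  have H2' : ∀ T₁ T₂, Ind G T₁ → Ind G T₂ → p ∈ T₁ → q ∈ T₂ → ¬ (T₁ = A ∧ T₂ = Aᶜ) →
      F T₁ + F T₂ ≤ 0 := by
    intro T₁ T₂ h1 h2 hp1 hq2 hne
    rw [hF T₁ ⟨p, hp1⟩, hF T₂ ⟨q, hq2⟩]
    have := H2 T₁ T₂ h1 h2 hp1 hq2 hne
    omega
  obtain ⟨T₁, hT₁, hmax₁⟩ := Finset.exists_max_image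
    (Finset.univ.filter fun T => Ind G T ∧ p ∈ T) F ⟨{p}, by simp [hIp]⟩
  obtain ⟨T₂, hT₂, hmax₂⟩ := Finset.exists_max_image
    (Finset.univ.filter fun T => Ind G T ∧ q ∈ T) F ⟨{q}, by simp [hIq]⟩
  simp only [Finset.mem_filter, Finset.mem_univ, true_and, and_imp] at hT₁ hT₂ hmax₁ hmax₂
  have hm1 := hmax₁ _ hIp (by simp)
  have hm2 := hmax₂ _ hIq (by simp)
  by_cases hsum : F T₁ + F T₂ ≤ 0
  · refine ⟨(F T₁ + u p).toNat, by omega, fun T hT => ⟨fun h => ?_, fun h => ?_⟩⟩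
    · have e1 := hmax₁ T hT h
      rw [hF T ⟨p, h⟩] at e1
      omega
    · have e1 := hmax₂ T hT h
      rw [hF T ⟨q, h⟩] at e1
      omega
  · exfalso
    obtain ⟨rfl, rfl⟩ : T₁ = A ∧ T₂ = Aᶜ := by
      by_contra hne
      exact hsum (H2' T₁ T₂ hT₁.1 hT₂.1 hT₁.2 hT₂.2 hne)
    -- one unit is taken off the minimal admissible exponents of `x_p` and of `x_q`
    let c : Fin n → ℤ := fun v => (k : ℤ) - u v -
      (if v = p then F T₁ - 1 else 0) - (if v = q then F T₁ᶜ - 1 else 0)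
    have hc : ∀ T : Finset (Fin n), ∑ v ∈ T, c v = F T + k -
        (if p ∈ T then F T₁ - 1 else 0) - (if q ∈ T then F T₁ᶜ - 1 else 0) := by
      intro T
      simp only [c, Finset.sum_sub_distrib, Finset.sum_ite_eq', Finset.sum_const, nsmul_eq_mul, F]
      ring
    have hpT : p ∉ T₁ᶜ := by simpa using hp
    have := le_of_demand (N := k + 1) (c := c) hA hG hdeg p
      (by rw [hc, if_pos hp, if_neg hq]; push_cast; ring)
      (by rw [hc, if_neg hpT, if_pos hT₂.2]; push_cast; ring)
      (by
        intro T hT e1 e2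
        rw [hc]
        by_cases h1 : p ∈ T
        · have h2 : q ∉ T := fun h2 => hT p h1 q h2 hpq
          have := H2' T T₁ᶜ hT hIB h1 hT₂.2 (fun h => e1 h.1)
          rw [if_pos h1, if_neg h2]
          push_cast
          omega
        · rw [if_neg h1]
          by_cases h2 : q ∈ T
          · have := H2' T₁ T hIA hT hp h2 (fun h => e2 h.2)
            rw [if_pos h2]
            push_cast
            omega
          · have := H0' T hT h1 h2
            rw [if_neg h2]
            push_cast
            omega)
    omega

/-- The map of vertices identifying `q` with `p`. -/
def glue {n : ℕ} (p q : Fin n) : Fin n → Fin n := fun v => if v = q then p else v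

section
variable {K : Type} [Field K] {n : ℕ}

theorem sub_rename_glue_mem (p q : Fin n) (f : S K n) :
    f - rename (glue p q) f ∈ Ideal.span {(X p - X q : S K n)} := by
  rw [← Ideal.Quotient.eq]
  have : (Ideal.Quotient.mkₐ K (Ideal.span {(X p - X q : S K n)})) =
      (Ideal.Quotient.mkₐ K (Ideal.span {(X p - X q : S K n)})).comp (rename (glue p q)) := by
    ext v
    simp only [AlgHom.comp_apply, rename_X, glue]
    split_ifs with h
    · subst h
      rw [Ideal.Quotient.mkₐ_eq_mk, eq_comm, Ideal.Quotient.eq]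
      exact Ideal.subset_span (Set.mem_singleton _)
    · rfl
  exact DFunLike.congr_fun this f

theorem wdot_mapDomain {w : Fin n → ℕ} {r : Fin n → Fin n} (hw : ∀ v, w (r v) = w v)
    (u : Fin n →₀ ℕ) : wdot w (u.mapDomain r) = wdot w u := by
  have e : ∀ u : Fin n →₀ ℕ, wdot w u = u.sum fun v a => w v * a := fun u => by
    rw [Finsupp.sum_fintype _ _ (by simp)]
    rfl
  rw [e, e, Finsupp.sum_mapDomain_index (by simp) (by intros; ring)]
  simp only [hw]

theorem OrdGE.rename {w : Fin n → ℕ} {r : Fin n → Fin n} (hw : ∀ v, w (r v) = w v) {m : ℕ}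
    {f : S K n} (hf : OrdGE w m f) : OrdGE w m (rename r f) := by
  intro u hu
  obtain ⟨u', rfl, hu'⟩ := coeff_rename_ne_zero _ _ _ (mem_support_iff.1 hu)
  rw [wdot_mapDomain hw]
  exact hf u' (mem_support_iff.2 hu')

/-- A valuation that agrees on `x_p` and `x_q` and vanishes on some variable carries over from
`(g h)` to `h` modulo `x_p - x_q`, where `g` is the sum of the variables other than `x_q`. -/
theorem ordGE_rename_of_mul {J : Ideal (S K n)} {p q : Fin n} (hpq : p ≠ q) {w : Fin n → ℕ}
    (hw : w p = w q) (hz : ∃ r, w r = 0) {m : ℕ} (hJ : ∀ j ∈ J, OrdGE w m j) {h y : S K n}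
    (hh : (∑ v ∈ Finset.univ.erase q, X v) * h - (X p - X q) * y ∈ J) :
    OrdGE w m (rename (glue p q) h) := by
  classical
  have h1 := (hJ _ hh).rename (r := glue p q) (by
    intro v
    unfold glue
    split_ifs with e
    · rw [e, hw]
    · rfl)
  have eg : rename (glue p q) (∑ v ∈ Finset.univ.erase q, X v : S K n) =
      ∑ v ∈ Finset.univ.erase q, X v := by
    rw [map_sum]
    refine Finset.sum_congr rfl fun v hv => ?_
    rw [rename_X, glue, if_neg (Finset.ne_of_mem_erase hv)]
  have ef : rename (glue p q) (X p - X q : S K n) = 0 := by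
    simp [glue, hpq]
  rw [map_sub, map_mul, map_mul, eg, ef, zero_mul, sub_zero] at h1
  obtain ⟨r, hr, hrq⟩ : ∃ r, w r = 0 ∧ r ≠ q := by
    obtain ⟨r, hr⟩ := hz
    by_cases e : r = q
    · exact ⟨p, by rw [hw, ← e, hr], hpq⟩
    · exact ⟨r, hr, e⟩
  refine h1.cancel (u := Finsupp.single r 1) ?_ ?_
  · rw [coeff_sum]
    simp [coeff_X, Finsupp.single_left_inj, hrq]
  · unfold wdot
    refine Finset.sum_eq_zero fun v _ => ?_
    by_cases e : v = r
    · rw [e, hr, zero_mul]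
    · rw [Finsupp.single_eq_of_ne e, mul_zero]

/-- Independent sets covering all vertices are the two sides of the bipartition. -/
theorem sides_of_cover {G : SimpleGraph (Fin n)} {A : Finset (Fin n)}
    (hA : ∀ i j, G.Adj i j → (i ∈ A ↔ j ∉ A)) (hG : G.Connected) {T₁ T₂ : Finset (Fin n)}
    (h1 : Ind G T₁) (h2 : Ind G T₂) (hcov : ∀ v, v ∈ T₁ ∨ v ∈ T₂) : T₁ = A ∨ T₁ = Aᶜ := by
  refine side_of_const hG fun v w hvw => const_of_meet hA h1 hvw ?_
  by_contra hcon
  push Not at hcon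
  exact h2 v ((hcov v).resolve_left hcon.1) w ((hcov w).resolve_left hcon.2) hvw

theorem wdot_add (w w' : Fin n → ℕ) (u : Fin n →₀ ℕ) :
    wdot (fun v => w v + w' v) u = wdot w u + wdot w' u := by
  simp [wdot, add_mul, Finset.sum_add_distrib]

/-- For a tree and `k ≤ n - 3`, the sum of the variables other than `x_q` is a nonzerodivisor modulo
`I_c(G)^k + (x_p - x_q)`, where `pq` is an edge. -/
theorem exists_mem_of_isTree {G : SimpleGraph (Fin n)} {A : Finset (Fin n)}
    (hA : ∀ i j, G.Adj i j → (i ∈ A ↔ j ∉ A)) (hG : G.IsTree) (hdeg : ∀ v, ∃ w, G.Adj v w)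
    {k : ℕ} (hk : k + 3 ≤ n) {p q : Fin n} (hpq : G.Adj p q) (hp : p ∈ A) {h : S K n}
    (hh : ∃ y, (∑ v ∈ Finset.univ.erase q, X v) * h - (X p - X q) * y ∈ compIdeal K n G ^ k) :
    ∃ y, h - (X p - X q) * y ∈ compIdeal K n G ^ k := by
  classical
  obtain ⟨y, hy⟩ := hh
  have hne := hpq.ne
  have hq : q ∉ A := (hA p q hpq).1 hp
  have hIA := ind_side hA
  have hIB := ind_side (bip_compl hA)
  have H0 : ∀ T, Ind G T → p ∉ T → q ∉ T →
      OrdGE (indw T) ((T.card - 1) * k) (rename (glue p q) h) := by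
    intro T hT h1 h2
    exact ordGE_rename_of_mul hne (by simp [indw, h1, h2]) ⟨p, by simp [indw, h1]⟩
      (fun j hj => ordGE_of_mem_pow hT hj) hy
  have H2 : ∀ T₁ T₂, Ind G T₁ → Ind G T₂ → p ∈ T₁ → q ∈ T₂ → ¬ (T₁ = A ∧ T₂ = Aᶜ) →
      OrdGE (fun v => indw T₁ v + indw T₂ v) ((T₁.card - 1) * k + (T₂.card - 1) * k)
        (rename (glue p q) h) := by
    intro T₁ T₂ h1 h2 hp1 hq2 hcon
    have hq1 : q ∉ T₁ := fun e => h1 p hp1 q e hpq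
    have hp2 : p ∉ T₂ := fun e => h2 p e q hq2 hpq
    refine ordGE_rename_of_mul hne (by simp [indw, hp1, hq1, hp2, hq2]) ?_ ?_ hy
    · by_contra hz
      push Not at hz
      have hcov : ∀ v, v ∈ T₁ ∨ v ∈ T₂ := by
        intro v
        have := hz v
        by_contra hv
        push Not at hv
        simp [indw, hv.1, hv.2] at this
      refine hcon ⟨?_, ?_⟩
      · refine (sides_of_cover hA hG.1 h1 h2 hcov).resolve_right ?_
        rintro rfl
        exact Finset.mem_compl.1 hp1 hp
      · refine (sides_of_cover hA hG.1 h2 h1 fun v => (hcov v).symm).resolve_left ?_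
        rintro rfl
        exact hq hq2
    · intro j hj u hu
      rw [wdot_add]
      exact add_le_add (ordGE_of_mem_pow h1 hj u hu) (ordGE_of_mem_pow h2 hj u hu)
  have hmon : ∀ u ∈ (rename (glue p q) h).support, ∀ c : K,
      (monomial u c : S K n) ∈ compIdeal K n G ^ k ⊔ Ideal.span {(X p - X q : S K n)} := by
    intro u hu c
    have huq : u q = 0 := by
      obtain ⟨u', rfl, -⟩ := coeff_rename_ne_zero _ _ _ (mem_support_iff.1 hu)
      refine Finsupp.mapDomain_of_notMem_range _ _ ?_
      rintro ⟨v, hv⟩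
      unfold glue at hv
      split_ifs at hv with e
      · exact hne hv
      · exact e hv
    obtain ⟨x, hx, hshift⟩ := exists_shift (u := u) hA hG hdeg hk hpq hp huq
      (fun T hT h1 h2 => by
        have := H0 T hT h1 h2 u hu
        rwa [wdot_indw] at this)
      (fun T₁ T₂ h1 h2 h3 h4 h5 => by
        have := H2 T₁ T₂ h1 h2 h3 h4 h5 u hu
        rwa [wdot_add, wdot_indw, wdot_indw] at this)
    let u' : Fin n →₀ ℕ := u.erase p + Finsupp.single p x + Finsupp.single q (u p - x)
    have hu'sum : ∀ T : Finset (Fin n), ∑ v ∈ T, u' v + (if p ∈ T then u p else 0) =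
        ∑ v ∈ T, u v + (if p ∈ T then x else 0) + (if q ∈ T then u p - x else 0) := by
      intro T
      have e : ∀ v, u' v + (if v = p then u p else 0) =
          u v + (if v = p then x else 0) + (if v = q then u p - x else 0) := by
        intro v
        simp only [u', Finsupp.add_apply, Finsupp.single_apply, Finsupp.erase_apply]
        by_cases e1 : v = p
        · subst e1; simp [hne.symm, hne]; omega
        · simp [e1, Ne.symm e1, eq_comm]
      have := Finset.sum_congr (rfl : T = T) fun v _ => e v
      simpa only [Finset.sum_add_distrib, Finset.sum_ite_eq'] using this
    have hmem : (monomial u' c : S K n) ∈ compIdeal K n G ^ k := by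
      refine monomial_mem_pow hA hdeg p (fun T hT => ?_) c
      have e := hu'sum T
      by_cases h1 : p ∈ T
      · have h2 : q ∉ T := fun h2 => hT p h1 q h2 hpq
        rw [if_pos h1, if_pos h1, if_neg h2] at e
        have := (hshift T hT).1 h1
        omega
      · rw [if_neg h1, if_neg h1] at e
        by_cases h2 : q ∈ T
        · rw [if_pos h2] at e
          have := (hshift T hT).2 h2
          omega
        · rw [if_neg h2] at e
          have := H0 T hT h1 h2 u hu
          rw [wdot_indw] at this
          omega
    have hmap : u'.mapDomain (glue p q) = u := by
      simp only [u', Finsupp.mapDomain_add, Finsupp.mapDomain_single]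
      have e : (u.erase p).mapDomain (glue p q) = u.erase p := by
        conv_rhs => rw [← Finsupp.mapDomain_id (v := u.erase p)]
        refine Finsupp.mapDomain_congr fun v hv => ?_
        rw [glue, if_neg]
        · rfl
        · rintro rfl
          rw [Finsupp.mem_support_iff, Finsupp.erase_ne hne.symm] at hv
          exact hv huq
      rw [e, add_assoc]
      simp only [glue, hne, if_false, if_true]
      rw [← Finsupp.single_add, show x + (u p - x) = u p by omega, Finsupp.erase_add_single]
    have hd := sub_rename_glue_mem p q (monomial u' c : S K n)
    rw [rename_monomial, hmap] at hd
    have := Ideal.sub_mem _ (Ideal.mem_sup_left hmem) (Ideal.mem_sup_right hd)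
    rwa [sub_sub_cancel] at this
  have hσ : rename (glue p q) h ∈
      compIdeal K n G ^ k ⊔ Ideal.span {(X p - X q : S K n)} := by
    rw [(rename (glue p q) h).as_sum]
    exact Ideal.sum_mem _ fun u hu => hmon u hu _
  have hh : h ∈ compIdeal K n G ^ k ⊔ Ideal.span {(X p - X q : S K n)} := by
    have := Ideal.add_mem _ (Ideal.mem_sup_right (sub_rename_glue_mem p q h)) hσ
    rwa [sub_add_cancel] at this
  obtain ⟨a, ha, b, hb, rfl⟩ := Submodule.mem_sup.1 hh
  obtain ⟨z, rfl⟩ := Ideal.mem_span_singleton'.1 hb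
  exact ⟨z, by rwa [mul_comm z, add_sub_cancel_right]⟩

end

/-! ### The depth of the powers and its stability -/

section
variable {K : Type} [Field K] {n : ℕ}

theorem sub_mem_maxIdl (p q : Fin n) : (X p - X q : S K n) ∈ maxIdl K n :=
  Ideal.sub_mem _ (X_mem_maxIdl p) (X_mem_maxIdl q)

theorem sdepth_eq_one {G : SimpleGraph (Fin n)} {A : Finset (Fin n)}
    (hA : ∀ i j, G.Adj i j → (i ∈ A ↔ j ∉ A)) (hdeg : ∀ v, ∃ w, G.Adj v w) (hn : 3 ≤ n) {k : ℕ}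
    (hk : 0 < k) (hgood : Good G A k) : sdepth (compIdeal K n G ^ k) = 1 := by
  unfold sdepth
  refine IsGreatest.csSup_eq ⟨?_, ?_⟩
  · obtain ⟨q, hpq⟩ := hdeg ⟨0, by omega⟩
    refine ⟨[X ⟨0, by omega⟩ - X q], rfl, ?_, ?_⟩
    · intro r hr
      rw [List.mem_singleton] at hr
      rw [hr]
      exact sub_mem_maxIdl _ _
    · exact isRegular_one (compIdeal_pow_le_maxIdl hn G hk) (sub_mem_maxIdl _ _)
        fun h hh => mem_of_sub_mul_mem hA hdeg hpq hh
  · rintro _ ⟨rs, rfl, hm, hreg⟩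
    exact length_le_one_of_good hA hdeg hn hgood hm hreg

theorem sdepth_ne_one_of_isTree {G : SimpleGraph (Fin n)} {A : Finset (Fin n)}
    (hA : ∀ i j, G.Adj i j → (i ∈ A ↔ j ∉ A)) (hG : G.IsTree) (hdeg : ∀ v, ∃ w, G.Adj v w)
    {k : ℕ} (hk : 0 < k) (hkn : k + 3 ≤ n) : sdepth (compIdeal K n G ^ k) ≠ 1 := by
  classical
  obtain ⟨p, q, hpq, hp⟩ : ∃ p q, G.Adj p q ∧ p ∈ A := by
    obtain ⟨q, hpq⟩ := hdeg ⟨0, by omega⟩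
    by_cases h : (⟨0, by omega⟩ : Fin n) ∈ A
    · exact ⟨_, q, hpq, h⟩
    · exact ⟨q, _, hpq.symm, (hA _ _ hpq.symm).2 h⟩
  have hg : (∑ v ∈ Finset.univ.erase q, X v : S K n) ∈ maxIdl K n :=
    Ideal.sum_mem _ fun v _ => X_mem_maxIdl v
  have hreg := isRegular_two (J := compIdeal K n G ^ k)
    (compIdeal_pow_le_maxIdl (by omega) G hk) (sub_mem_maxIdl p q) hg
    (fun h hh => mem_of_sub_mul_mem hA hdeg hpq hh)
    (fun h hh => exists_mem_of_isTree hA hG hdeg hkn hpq hp hh)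
  intro h1
  unfold sdepth at h1
  -- an unbounded set of lengths would have supremum `0`
  by_cases hbdd : BddAbove {l | ∃ rs : List (S K n), rs.length = l ∧ (∀ r ∈ rs, r ∈ maxIdl K n) ∧
      RingTheory.Sequence.IsRegular ((S K n) ⧸ compIdeal K n G ^ k) rs}
  · have := le_csSup hbdd ⟨[X p - X q, ∑ v ∈ Finset.univ.erase q, X v], rfl, (by
      intro r hr
      simp only [List.mem_cons, List.not_mem_nil, or_false] at hr
      rcases hr with rfl | rfl
      · exact sub_mem_maxIdl p q
      · exact hg), hreg⟩
    rw [h1] at this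
    simp at this
  · rw [csSup_of_not_bddAbove hbdd] at h1
    simp at h1

end

/-- For a connected bipartite graph `G` with `n` vertices,
`dstab(I_c(G)) ≤ n - 2`, with equality iff `G` is a tree. -/
theorem dstab_compIdeal_bipartite
    (K : Type) [Field K] (n : ℕ) (hn : 3 ≤ n) (G : SimpleGraph (Fin n))
    (hconn : G.Connected)
    (hbip : ∃ A : Set (Fin n), ∀ i j, G.Adj i j → (i ∈ A ↔ j ∉ A)) :
    dstab (compIdeal K n G) ≤ n - 2 ∧
    (dstab (compIdeal K n G) = n - 2 ↔ G.IsTree) := by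
  classical
  obtain ⟨A', hA'⟩ := hbip
  let A : Finset (Fin n) := Finset.univ.filter fun v => v ∈ A'
  have hA : ∀ i j, G.Adj i j → (i ∈ A ↔ j ∉ A) := by
    intro i j hij
    simpa [A] using hA' i j hij
  have : Nontrivial (Fin n) := Fin.nontrivial_iff_two_le.2 (by omega)
  have hdeg : ∀ v, ∃ w, G.Adj v w := fun v => hconn.preconnected.exists_adj_of_nontrivial v
  have hone : ∀ k, n - 2 ≤ k → sdepth (compIdeal K n G ^ k) = 1 := fun k hk =>
    sdepth_eq_one hA hdeg hn (by omega) (good_of_connected (by omega) hA hconn hk)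
  have hmem : n - 2 ∈ {k0 | 0 < k0 ∧
      ∀ k, k0 ≤ k → sdepth (compIdeal K n G ^ k) = sdepth (compIdeal K n G ^ k0)} :=
    ⟨by omega, fun k hk => by rw [hone k hk, hone _ le_rfl]⟩
  have hle : dstab (compIdeal K n G) ≤ n - 2 := Nat.sInf_le hmem
  obtain ⟨hpos, hstab⟩ : 0 < dstab (compIdeal K n G) ∧ ∀ k, dstab (compIdeal K n G) ≤ k →
      sdepth (compIdeal K n G ^ k) = sdepth (compIdeal K n G ^ dstab (compIdeal K n G)) :=
    Nat.sInf_mem ⟨_, hmem⟩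
  refine ⟨hle, fun heq => ?_, fun htree => ?_⟩
  · by_contra hnt
    obtain ⟨h4, hgood⟩ := good_of_not_isTree hA hconn hnt
    have hone' : ∀ k, n - 3 ≤ k → sdepth (compIdeal K n G ^ k) = 1 := fun k hk =>
      sdepth_eq_one hA hdeg hn (by omega) (hgood k hk)
    have : dstab (compIdeal K n G) ≤ n - 3 :=
      Nat.sInf_le ⟨by omega, fun k hk => by rw [hone' k hk, hone' _ le_rfl]⟩
    omega
  · by_contra hne
    refine sdepth_ne_one_of_isTree (K := K) hA htree hdeg (k := n - 3) (by omega) (by omega) ?_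
    rw [hstab _ (by omega), ← hstab _ hle, hone _ le_rfl]

end Paper
end
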